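/- arXiv:2507.10954 — 3 statements merged into one kernel-verified Lean document; each statement's English description precedes it below -/
import Mathlib

section
/- Let I ⊆ ℝ be an interval and f : (0,∞) → (0,∞) be continuous. Assume: (1) for every p ∈ I the integral F_p(x) = ∫₀^∞ t^p f(t) e^{−xt} dt converges for all x > 0; (2) there exist constants M > 0 and c ≥ 0 such that 0 < t^p f(t) ≤ M e^{ct} for all t > 0 and all p ∈ I; (3) the n-tuples p = (p₁,…,pₙ) and q = (q₁,…,qₙ) ∈ Iⁿ with n ≥ 2 satisfy p ≺ q. If there is a real number θ < 1 + min{pₙ, qₙ} such that t ↦ t^θ f(t) is log-concave on (0,∞), then the function x ↦ ∏_{j=1}^n F_{p_j}(x) − λ ∏_{j=1}^n F_{q_j}(x), where λ = ∏_{j=1}^n Γ(p_j − θ + 1)/Γ(q_j − θ + 1), is completely monotonic on (0,∞). -/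
/-!
Put `g(t) = t^θ f(t)` and let `φ_p = F_p / Γ(p - θ + 1)`. Since
`∏ Γ(p_j - θ + 1) > 0`, the claim is that `∏ φ_{p_j} - ∏ φ_{q_j}` is completely monotonic.

*Reduction to two factors.* Majorization decomposes into finitely many transfers, each bringing two
coordinates closer together with their sum fixed (`majorization_induction`). The exponents that
occur stay between entries of `q`, hence in `I` and above `θ - 1`. Along one transfer the difference
of the products is a two-factor difference times a product of completely monotonic functions, and
completely monotonic functions are closed under sums and products.

*Two factors.* Let `p₁ + p₂ = q₁ + q₂` and `q₂ ≤ p₂ ≤ p₁ ≤ q₁`. The product `F_{p₁} F_{p₂}` is the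
Laplace transform of the convolution
`k_p(s) = ∫₀ˢ t^(p₁ - θ) (s - t)^(p₂ - θ) g(t) g(s - t) dt`, so it is enough that
`k_p(s) / (Γ(p₁ - θ + 1) Γ(p₂ - θ + 1)) ≥ k_q(s) / (Γ(q₁ - θ + 1) Γ(q₂ - θ + 1))` for every `s > 0`.
The Gamma factors normalize the beta kernels to the same total mass. After symmetrization under
`t ↦ s - t`, the ratio of the `p`-kernel to the `q`-kernel is, up to a constant,
`cosh(αL) / cosh(βL)` with `0 ≤ α ≤ β` and `L = log((s - t)/t)`, so it increases towards `t = s/2`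
(`symKer_ratio`). By log-concavity so does `g(t) g(s - t)` (`mul_reflect_mono`). Chebyshev's
integral inequality gives the comparison (`beta_weighted_le`).
-/

open Real MeasureTheory Set Filter

/-- A function is completely monotonic on `(0, ∞)` if it is infinitely differentiable there
and `(-1)^m h^(m)(x) ≥ 0` for all `m ∈ ℕ` and `x > 0`. -/
def CompletelyMonotonicOn (h : ℝ → ℝ) : Prop :=
  ContDiffOn ℝ (⊤ : ℕ∞) h (Set.Ioi 0) ∧
  ∀ (m : ℕ) (x : ℝ), 0 < x → 0 ≤ (-1 : ℝ) ^ m * iteratedDerivWithin m h (Set.Ioi 0) x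

/-- `p ≺ q` : `p` is (strictly) majorized by `q`. -/
def Majorizes {n : ℕ} (p q : Fin n → ℝ) : Prop :=
  (∀ i j : Fin n, i ≤ j → p j ≤ p i) ∧
  (∀ i j : Fin n, i ≤ j → q j ≤ q i) ∧
  (∀ k : Fin n, ∑ j ∈ Finset.univ.filter (fun j => j ≤ k), p j ≤
      ∑ j ∈ Finset.univ.filter (fun j => j ≤ k), q j) ∧
  (∑ j, p j = ∑ j, q j) ∧ p ≠ q

/-- `F_p(x) = ∫₀^∞ t^p f(t) e^{-xt} dt`. -/
noncomputable def LapF (f : ℝ → ℝ) (p x : ℝ) : ℝ :=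
  ∫ t in Set.Ioi (0 : ℝ), t ^ p * f t * Real.exp (-x * t)

/-! ### Completely monotonic functions -/

namespace CompletelyMonotonicOn

lemma congr {h k : ℝ → ℝ} (hh : CompletelyMonotonicOn h) (e : ∀ x > 0, k x = h x) :
    CompletelyMonotonicOn k := by
  have e' : Set.EqOn k h (Set.Ioi 0) := fun x hx => e x hx
  refine ⟨hh.1.congr e', fun m x hx => ?_⟩
  rw [iteratedDerivWithin_congr e' hx]
  exact hh.2 m x hx

lemma add {h k : ℝ → ℝ} (hh : CompletelyMonotonicOn h) (hk : CompletelyMonotonicOn k) :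
    CompletelyMonotonicOn (fun x => h x + k x) := by
  refine ⟨hh.1.add hk.1, fun m x hx => ?_⟩
  have := iteratedDerivWithin_add (n := m) (mem_Ioi.2 hx) (uniqueDiffOn_Ioi (0 : ℝ))
    ((hh.1 x hx).of_le (by exact_mod_cast le_top)) ((hk.1 x hx).of_le (by exact_mod_cast le_top))
  have e : (fun x => h x + k x) = h + k := rfl
  rw [e, this, mul_add]
  exact add_nonneg (hh.2 m x hx) (hk.2 m x hx)

lemma mul {h k : ℝ → ℝ} (hh : CompletelyMonotonicOn h) (hk : CompletelyMonotonicOn k) :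
    CompletelyMonotonicOn (fun x => h x * k x) := by
  refine ⟨hh.1.mul hk.1, fun m x hx => ?_⟩
  have := iteratedDerivWithin_mul (n := m) (mem_Ioi.2 hx) (uniqueDiffOn_Ioi (0 : ℝ))
    ((hh.1 x hx).of_le (by exact_mod_cast le_top)) ((hk.1 x hx).of_le (by exact_mod_cast le_top))
  have e : (fun x => h x * k x) = h * k := rfl
  rw [e, this, Finset.mul_sum]
  refine Finset.sum_nonneg fun i hi => ?_
  have him : i ≤ m := Nat.lt_succ_iff.1 (Finset.mem_range.1 hi)
  have : (-1 : ℝ) ^ m = (-1) ^ i * (-1) ^ (m - i) := by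
    rw [← pow_add, Nat.add_sub_cancel' him]
  calc (0 : ℝ) ≤ (m.choose i : ℝ) * (((-1) ^ i * iteratedDerivWithin i h (Set.Ioi 0) x) *
        ((-1) ^ (m - i) * iteratedDerivWithin (m - i) k (Set.Ioi 0) x)) :=
        mul_nonneg (Nat.cast_nonneg _) (mul_nonneg (hh.2 i x hx) (hk.2 (m - i) x hx))
    _ = _ := by rw [this]; ring

lemma const {a : ℝ} (ha : 0 ≤ a) : CompletelyMonotonicOn (fun _ => a) := by
  refine ⟨contDiffOn_const, fun m x hx => ?_⟩
  rw [iteratedDerivWithin_const]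
  split_ifs with h
  · simpa [h] using ha
  · simp

lemma prod {ι : Type*} (s : Finset ι) {h : ι → ℝ → ℝ} (hh : ∀ i ∈ s, CompletelyMonotonicOn (h i)) :
    CompletelyMonotonicOn (fun x => ∏ i ∈ s, h i x) := by
  classical
  induction s using Finset.induction_on with
  | empty => simpa using const zero_le_one
  | insert i s hi ih =>
    simp only [Finset.prod_insert hi]
    exact (hh i (Finset.mem_insert_self i s)).mul
      (ih fun j hj => hh j (Finset.mem_insert_of_mem hj))

/-- The easy half of Bernstein's theorem: the Laplace transform of a nonnegative density is
completely monotonic. It is the moment generating function of `s ↦ -s` under that density. -/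
lemma of_laplace {h K : ℝ → ℝ} (hK : ∀ s > 0, 0 ≤ K s)
    (hK_int : ∀ x > 0, IntegrableOn (fun s => Real.exp (-x * s) * K s) (Set.Ioi 0))
    (hh : ∀ x > 0, h x = ∫ s in Set.Ioi (0 : ℝ), Real.exp (-x * s) * K s) :
    CompletelyMonotonicOn h := by
  set μ : Measure ℝ := (volume.restrict (Set.Ioi (0 : ℝ))).withDensity
    (fun s => ENNReal.ofReal (K s)) with hμ
  have hKm : AEMeasurable K (volume.restrict (Set.Ioi (0 : ℝ))) := by
    have h1 := (hK_int 1 one_pos).aestronglyMeasurable.aemeasurable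
    have h2 : Measurable fun s : ℝ => Real.exp s := Real.measurable_exp
    refine (h2.aemeasurable.mul h1).congr (ae_of_all _ fun s => ?_)
    simp only [Pi.mul_apply]
    rw [← mul_assoc, ← Real.exp_add]; simp
  have hKm' : AEMeasurable (fun s => ENNReal.ofReal (K s)) (volume.restrict (Set.Ioi (0 : ℝ))) :=
    hKm.ennreal_ofReal
  have hfin : ∀ᵐ s ∂(volume.restrict (Set.Ioi (0 : ℝ))), ENNReal.ofReal (K s) < ⊤ :=
    ae_of_all _ fun s => ENNReal.ofReal_lt_top
  have hae : ∀ᵐ s ∂(volume.restrict (Set.Ioi (0 : ℝ))), (ENNReal.ofReal (K s)).toReal = K s := by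
    filter_upwards [ae_restrict_mem measurableSet_Ioi] with s hs
    exact ENNReal.toReal_ofReal (hK s hs)
  have hsub : Set.Ioi (0 : ℝ) ⊆
      interior (ProbabilityTheory.integrableExpSet (fun s : ℝ => -s) μ) := by
    refine interior_maximal (fun x hx => ?_) isOpen_Ioi
    simp only [ProbabilityTheory.integrableExpSet, Set.mem_ofPred_eq]
    rw [hμ, integrable_withDensity_iff_integrable_smul₀' hKm' hfin]
    refine (hK_int x hx).congr ?_
    filter_upwards [hae] with s hs
    rw [hs, smul_eq_mul, mul_comm, mul_neg, neg_mul]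
  have heq : Set.EqOn h (ProbabilityTheory.mgf (fun s : ℝ => -s) μ) (Set.Ioi 0) := by
    intro x hx
    rw [hh x hx, ProbabilityTheory.mgf, hμ, integral_withDensity_eq_integral_toReal_smul₀ hKm' hfin]
    refine integral_congr_ae ?_
    filter_upwards [hae] with s hs
    rw [hs, smul_eq_mul, mul_comm, mul_neg, neg_mul]
  refine ⟨?_, fun m x hx => ?_⟩
  · refine ContDiffOn.congr ?_ heq
    exact ((ProbabilityTheory.analyticOnNhd_mgf (X := fun s : ℝ => -s) (μ := μ)).mono
      hsub).contDiffOn (uniqueDiffOn_Ioi 0)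
  · rw [iteratedDerivWithin_congr heq hx, iteratedDerivWithin_of_isOpen isOpen_Ioi hx,
      ProbabilityTheory.iteratedDeriv_mgf (hsub hx), ← integral_const_mul, hμ,
      integral_withDensity_eq_integral_toReal_smul₀ hKm' hfin]
    refine integral_nonneg_of_ae ?_
    filter_upwards [ae_restrict_mem measurableSet_Ioi] with s hs
    have hs : 0 < s := hs
    have e : (-1 : ℝ) ^ m * ((-s) ^ m * Real.exp (x * -s)) = s ^ m * Real.exp (x * -s) := by
      rw [← mul_assoc, ← mul_pow]; simp
    rw [e]
    simp only [smul_eq_mul, Pi.zero_apply]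
    positivity

end CompletelyMonotonicOn

/-! ### Majorization -/

/-- Majorization by Robin Hood transfers: to prove `P q` for a `q` whose partial sums dominate those
of the decreasing tuple `p`, with the same total, it suffices to know `P p` and that `P` passes back
along every transfer replacing two entries `q j ≥ q k` by two values `r ≥ s` lying between them and
having the same sum. Each transfer used fixes at least one more coordinate to its value in `p`, and
`m` bounds the number of coordinates that differ. The tuple `q` is not assumed decreasing, so
the intermediate tuples need not be either. -/
lemma majorization_induction {n : ℕ} {p : Fin n → ℝ} (hp : ∀ i j : Fin n, i ≤ j → p j ≤ p i)
    {P : (Fin n → ℝ) → Prop} (base : P p)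
    (step : ∀ (q : Fin n → ℝ) (j k : Fin n) (r s : ℝ), j ≠ k → q k ≤ s → s ≤ r → r ≤ q j →
      r + s = q j + q k → P (Function.update (Function.update q j r) k s) → P q) :
    ∀ (m : ℕ) (q : Fin n → ℝ), (Finset.univ.filter fun i => q i ≠ p i).card ≤ m →
      (∀ k : Fin n, ∑ j ∈ Finset.univ.filter (fun j => j ≤ k), p j ≤
        ∑ j ∈ Finset.univ.filter (fun j => j ≤ k), q j) →
      ∑ j, p j = ∑ j, q j → P q := by
  intro m
  induction m with
  | zero =>
    intro q hc _ _
    have : q = p := by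
      funext i
      by_contra hi
      have : i ∈ (Finset.univ.filter fun i => q i ≠ p i) := by simp [hi]
      rw [Finset.card_eq_zero.1 (Nat.le_zero.1 hc)] at this
      simp at this
    rwa [this]
  | succ m ih =>
    intro q hc hpart htot
    by_cases hlow : ∃ k, q k < p k
    · obtain ⟨k, hk, hkmin⟩ : ∃ k, q k < p k ∧ ∀ i < k, p i ≤ q i := by
        obtain ⟨k, hk⟩ := (Set.toFinite {k | q k < p k}).exists_minimal hlow
        exact ⟨k, hk.1, fun i hi => not_lt.1 fun h => absurd (hk.2 h hi.le) (not_le.2 hi)⟩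
      -- `k` is the first deficient index, so some earlier index must be in excess
      obtain ⟨j, hjk, hj⟩ : ∃ j < k, p j < q j := by
        by_contra! hcon
        refine absurd (hpart k) (not_le.2 ?_)
        refine Finset.sum_lt_sum (fun i hi => ?_) ⟨k, by simp, hk⟩
        rcases (Finset.mem_filter.1 hi).2.lt_or_eq with h | h
        · exact hcon i h
        · rw [h]; exact hk.le
      set δ := min (q j - p j) (p k - q k) with hδ
      have hδ0 : 0 < δ := lt_min (sub_pos.2 hj) (sub_pos.2 hk)
      have hδ1 : δ ≤ q j - p j := min_le_left _ _
      have hδ2 : δ ≤ p k - q k := min_le_right _ _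
      have hpjk := hp j k hjk.le
      refine step q j k (q j - δ) (q k + δ) hjk.ne (by linarith) (by linarith) (by linarith)
        (by ring) (ih _ ?_ ?_ ?_)
      all_goals set q' := Function.update (Function.update q j (q j - δ)) k (q k + δ) with hq'
      all_goals
        have hqj : q' j = q j - δ := by simp [hq', Function.update_of_ne hjk.ne]
        have hqk : q' k = q k + δ := by simp [hq']
        have hqo : ∀ i, i ≠ j → i ≠ k → q' i = q i := fun i h1 h2 => by
          simp [hq', Function.update_of_ne h1, Function.update_of_ne h2]
        have hq'e : ∀ i, q' i = q i + ((if i = k then δ else 0) - (if i = j then δ else 0)) := by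
          intro i
          by_cases h1 : i = j
          · subst h1; simp [hqj, hjk.ne]; ring
          · by_cases h2 : i = k
            · subst h2; simp [hqk, h1]
            · simp [hqo i h1 h2, h1, h2]
      · refine Nat.lt_succ_iff.1 (lt_of_lt_of_le (Finset.card_lt_card ?_) hc)
        have hsub : (Finset.univ.filter fun i => q' i ≠ p i) ⊆
            (Finset.univ.filter fun i => q i ≠ p i) := by
          intro i hi
          simp only [Finset.mem_filter, Finset.mem_univ, true_and] at hi ⊢
          by_cases h1 : i = j
          · subst h1; exact hj.ne'
          · by_cases h2 : i = k
            · subst h2; exact hk.ne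
            · rwa [hqo i h1 h2] at hi
        refine hsub.ssubset_of_ne fun heq => ?_
        -- the coordinate attaining the minimum `δ` now agrees with `p`
        rcases min_choice (q j - p j) (p k - q k) with h | h
        · have : j ∈ (Finset.univ.filter fun i => q i ≠ p i) := by simp [hj.ne']
          rw [← heq] at this
          simp only [Finset.mem_filter, Finset.mem_univ, true_and] at this
          exact this (by rw [hqj, hδ, h]; ring)
        · have : k ∈ (Finset.univ.filter fun i => q i ≠ p i) := by simp [hk.ne]
          rw [← heq] at this
          simp only [Finset.mem_filter, Finset.mem_univ, true_and] at this
          exact this (by rw [hqk, hδ, h]; ring)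
      · intro i
        simp only [hq'e, Finset.sum_add_distrib, Finset.sum_sub_distrib, Finset.sum_ite_eq',
          Finset.mem_filter, Finset.mem_univ, true_and]
        by_cases h1 : k ≤ i
        · have := hpart i
          simp [h1, hjk.le.trans h1, this]
        · by_cases h2 : j ≤ i
          · -- For `j ≤ i < k` the slack of the partial sum consists of nonnegative terms, one of
            -- which is `q j - p j ≥ δ`.
            simp only [h1, h2, if_true, if_false]
            have hle : ∀ l ∈ Finset.univ.filter (fun l => l ≤ i), 0 ≤ q l - p l := fun l hl =>
              sub_nonneg.2 (hkmin l (lt_of_le_of_lt (Finset.mem_filter.1 hl).2 (not_le.1 h1)))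
            have := Finset.single_le_sum hle (a := j) (by simp [h2])
            rw [Finset.sum_sub_distrib] at this
            linarith
          · simpa [h1, h2] using hpart i
      · simp only [hq'e, Finset.sum_add_distrib, Finset.sum_sub_distrib, Finset.sum_ite_eq']
        simpa using htot
    · push Not at hlow
      have : p = q := by
        funext i
        exact (Finset.sum_eq_sum_iff_of_le (fun i _ => hlow i)).1 htot i (Finset.mem_univ i)
      rwa [← this]

/-! ### Symmetrized beta kernels -/

/-- The beta kernel `t ^ a * (s - t) ^ b` on `(0, s)`, symmetrized (without the factor `1/2`) under
the reflection `t ↦ s - t`. -/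
noncomputable def symKer (s a b t : ℝ) : ℝ := t ^ a * (s - t) ^ b + t ^ b * (s - t) ^ a

lemma symKer_symm (s a b t : ℝ) : symKer s a b (s - t) = symKer s a b t := by
  simp only [symKer, sub_sub_cancel]; ring

lemma symKer_eq_cosh {s a b t : ℝ} (h0 : 0 < t) (h1 : t < s) :
    symKer s a b t = 2 * Real.exp ((a + b) / 2 * (Real.log t + Real.log (s - t))) *
      Real.cosh ((a - b) / 2 * (Real.log (s - t) - Real.log t)) := by
  have h2 : 0 < s - t := by linarith
  rw [symKer, Real.rpow_def_of_pos h0, Real.rpow_def_of_pos h0, Real.rpow_def_of_pos h2,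
    Real.rpow_def_of_pos h2, Real.cosh_eq, mul_div_assoc', mul_assoc, mul_div_assoc,
    mul_comm (2 : ℝ), div_mul_cancel₀ _ two_ne_zero, mul_add, ← Real.exp_add, ← Real.exp_add,
    ← Real.exp_add, ← Real.exp_add, add_comm]
  congr 2 <;> ring

/-- `cosh (α l) / cosh (β l)` is decreasing in `|l|` when `0 ≤ α ≤ β`. -/
lemma cosh_mul_cosh_le {α β l m : ℝ} (hα : 0 ≤ α) (hαβ : α ≤ β) (hlm : |l| ≤ |m|) :
    Real.cosh (α * m) * Real.cosh (β * l) ≤ Real.cosh (α * l) * Real.cosh (β * m) := by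
  have key : ∀ x y : ℝ, Real.cosh x * Real.cosh y =
      (Real.cosh (x + y) + Real.cosh (x - y)) / 2 := fun x y => by
    rw [Real.cosh_add, Real.cosh_sub]; ring
  have habs : ∀ γ x : ℝ, 0 ≤ γ → Real.cosh (γ * x) = Real.cosh (γ * |x|) := fun γ x hγ => by
    rw [← Real.cosh_abs (γ * x), abs_mul, abs_of_nonneg hγ]
  have hβ := hα.trans hαβ
  rw [habs α m hα, habs β l hβ, habs α l hα, habs β m hβ, key, key]
  have hl := abs_nonneg l
  have hm := abs_nonneg m
  generalize |l| = l' at *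
  generalize |m| = m' at *
  have e1 : Real.cosh (α * m' + β * l') ≤ Real.cosh (α * l' + β * m') := by
    rw [Real.cosh_le_cosh, abs_of_nonneg (by positivity), abs_of_nonneg (by positivity)]
    nlinarith
  have e2 : Real.cosh (α * m' - β * l') ≤ Real.cosh (α * l' - β * m') := by
    rw [Real.cosh_le_cosh]
    refine le_trans (abs_le.2 ⟨?_, ?_⟩) (neg_le_abs _) <;> nlinarith
  linarith

/-- The ratio of two symmetrized beta kernels of the same total degree, the second with the more
spread exponents, increases towards the midpoint of `(0, s)`: by `symKer_eq_cosh` it is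
`cosh (α L) / cosh (β L)` with `0 ≤ α ≤ β` and `L = log ((s - t) / t)`. -/
lemma symKer_ratio {s a₁ a₂ b₁ b₂ u v : ℝ} (hsum : a₁ + a₂ = b₁ + b₂) (ha : a₂ ≤ a₁)
    (hab : a₁ ≤ b₁) (hv : 0 < v) (hvu : v ≤ u) (hus : u ≤ s - v) :
    symKer s a₁ a₂ v * symKer s b₁ b₂ u ≤ symKer s a₁ a₂ u * symKer s b₁ b₂ v := by
  have hu : 0 < u := hv.trans_le hvu
  rw [symKer_eq_cosh hu (by linarith), symKer_eq_cosh hv (by linarith),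
    symKer_eq_cosh hu (by linarith), symKer_eq_cosh hv (by linarith), hsum]
  have l1 : Real.log v ≤ Real.log u := Real.log_le_log hv hvu
  have l2 : Real.log u ≤ Real.log (s - v) := Real.log_le_log hu hus
  have l3 : Real.log v ≤ Real.log (s - u) := Real.log_le_log hv (by linarith)
  have l4 : Real.log (s - u) ≤ Real.log (s - v) := Real.log_le_log (by linarith) (by linarith)
  have hl : |Real.log (s - u) - Real.log u| ≤ |Real.log (s - v) - Real.log v| :=
    le_trans (abs_le.2 ⟨by linarith, by linarith⟩) (le_abs_self _)
  have := cosh_mul_cosh_le (α := (a₁ - a₂) / 2) (β := (b₁ - b₂) / 2) (by linarith)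
    (by linarith) hl
  have h3 := mul_le_mul_of_nonneg_left this (mul_pos (Real.exp_pos ((b₁ + b₂) / 2 *
    (Real.log u + Real.log (s - u)))) (Real.exp_pos ((b₁ + b₂) / 2 *
    (Real.log v + Real.log (s - v))))).le
  linarith

/-! ### The Chebyshev integral inequality -/

lemma integral_comb {μ : Measure ℝ} {f₁ f₂ f₃ f₄ : ℝ → ℝ} (h₁ : Integrable f₁ μ)
    (h₂ : Integrable f₂ μ) (h₃ : Integrable f₃ μ) (h₄ : Integrable f₄ μ) (c₁ c₂ c₃ c₄ : ℝ) :
    ∫ t, (c₁ * f₁ t - c₂ * f₂ t - c₃ * f₃ t + c₄ * f₄ t) ∂μ =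
      c₁ * ∫ t, f₁ t ∂μ - c₂ * ∫ t, f₂ t ∂μ - c₃ * ∫ t, f₃ t ∂μ + c₄ * ∫ t, f₄ t ∂μ := by
  have i₁ := h₁.const_mul c₁
  have i₂ := h₂.const_mul c₂
  have i₃ := h₃.const_mul c₃
  have i₄ := h₄.const_mul c₄
  have i₁₂ : Integrable (fun t => c₁ * f₁ t - c₂ * f₂ t) μ := i₁.sub i₂
  have i₁₂₃ : Integrable (fun t => c₁ * f₁ t - c₂ * f₂ t - c₃ * f₃ t) μ := i₁₂.sub i₃
  rw [integral_add i₁₂₃ i₄, integral_sub i₁₂ i₃, integral_sub i₁ i₂]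
  simp only [integral_const_mul]

/-- Chebyshev's integral inequality, for `A / B` and `H` varying in the same sense (stated without
division): integrate the pointwise inequality in `u`, then in `v`. -/
lemma chebyshev {μ : Measure ℝ} {A B H : ℝ → ℝ} {S : Set ℝ} (hS : ∀ᵐ t ∂μ, t ∈ S)
    (hA : Integrable A μ) (hB : Integrable B μ) (hAH : Integrable (fun t => A t * H t) μ)
    (hBH : Integrable (fun t => B t * H t) μ)
    (hmono : ∀ u ∈ S, ∀ v ∈ S, 0 ≤ (A u * B v - A v * B u) * (H u - H v)) :
    (∫ t, A t ∂μ) * (∫ t, B t * H t ∂μ) ≤ (∫ t, A t * H t ∂μ) * (∫ t, B t ∂μ) := by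
  have h1 : ∀ v ∈ S, 0 ≤ (∫ t, A t * H t ∂μ) * B v - (∫ t, A t ∂μ) * (B v * H v)
      - (∫ t, B t * H t ∂μ) * A v + (∫ t, B t ∂μ) * (A v * H v) := by
    intro v hv
    have e := integral_comb hAH hA hBH hB (B v) (B v * H v) (A v) (A v * H v)
    have e' : 0 ≤ ∫ u, (B v * (A u * H u) - B v * H v * A u - A v * (B u * H u) +
        A v * H v * B u) ∂μ := by
      refine integral_nonneg_of_ae ?_
      filter_upwards [hS] with u hu
      have := hmono u hu v hv
      simp only [Pi.zero_apply]
      linarith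
    linarith
  have h2 := integral_comb hB hBH hA hAH (∫ t, A t * H t ∂μ) (∫ t, A t ∂μ)
    (∫ t, B t * H t ∂μ) (∫ t, B t ∂μ)
  have h3 : 0 ≤ ∫ v, ((∫ t, A t * H t ∂μ) * B v - (∫ t, A t ∂μ) * (B v * H v)
      - (∫ t, B t * H t ∂μ) * A v + (∫ t, B t ∂μ) * (A v * H v)) ∂μ := by
    refine integral_nonneg_of_ae ?_
    filter_upwards [hS] with v hv using h1 v hv
  linarith

/-! ### Beta integrals with a symmetric weight -/

lemma integral_Ioo_reflect (s : ℝ) (φ : ℝ → ℝ) :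
    ∫ t in Set.Ioo 0 s, φ (s - t) = ∫ t in Set.Ioo 0 s, φ t := by
  rcases le_total 0 s with h | h
  · rw [← integral_Ioc_eq_integral_Ioo, ← integral_Ioc_eq_integral_Ioo,
      ← intervalIntegral.integral_of_le h, ← intervalIntegral.integral_of_le h,
      intervalIntegral.integral_comp_sub_left]
    simp
  · simp [Set.Ioo_eq_empty (not_lt.2 h)]

lemma integral_Ioo_beta {s a b : ℝ} (hs : 0 < s) (ha : -1 < a) (hb : -1 < b) :
    ∫ t in Set.Ioo 0 s, t ^ a * (s - t) ^ b = s ^ (a + b + 1) *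
      (Real.Gamma (a + 1) * Real.Gamma (b + 1) / Real.Gamma (a + b + 2)) := by
  have h := Complex.betaIntegral_scaled (a + 1 : ℝ) (b + 1 : ℝ) hs
  have e1 : (∫ x in (0 : ℝ)..s, (x : ℂ) ^ (((a + 1 : ℝ) : ℂ) - 1) *
      ((s : ℂ) - x) ^ (((b + 1 : ℝ) : ℂ) - 1)) =
      ((∫ t in Set.Ioo 0 s, t ^ a * (s - t) ^ b : ℝ) : ℂ) := by
    rw [intervalIntegral.integral_of_le hs.le, integral_Ioc_eq_integral_Ioo,
      ← integral_complex_ofReal]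
    refine setIntegral_congr_fun measurableSet_Ioo fun x hx => ?_
    have hx1 : 0 ≤ s - x := by linarith [hx.2]
    rw [Complex.ofReal_mul, Complex.ofReal_cpow hx.1.le, Complex.ofReal_cpow hx1]
    push_cast
    congr 2 <;> ring
  rw [e1, Complex.betaIntegral_eq_Gamma_mul_div _ _ (by simp; linarith) (by simp; linarith),
    ← Complex.ofReal_add, Complex.Gamma_ofReal, Complex.Gamma_ofReal, Complex.Gamma_ofReal] at h
  have e2 : (((s : ℂ)) ^ (((a + 1 + (b + 1) : ℝ) : ℂ) - 1)) = ((s ^ (a + b + 1) : ℝ) : ℂ) := by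
    rw [Complex.ofReal_cpow hs.le]
    push_cast
    congr 1; ring
  rw [e2] at h
  have e3 : a + b + 2 = a + 1 + (b + 1) := by ring
  rw [e3]
  exact_mod_cast h

/-- Integrability comes for free: a non-integrable function would have integral `0`. -/
lemma integrableOn_Ioo_beta {s a b : ℝ} (hs : 0 < s) (ha : -1 < a) (hb : -1 < b) :
    IntegrableOn (fun t => t ^ a * (s - t) ^ b) (Set.Ioo 0 s) := by
  by_contra hcon
  have h := integral_Ioo_beta hs ha hb
  rw [integral_undef hcon] at h
  have h1 := Real.Gamma_pos_of_pos (show 0 < a + 1 by linarith)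
  have h2 := Real.Gamma_pos_of_pos (show 0 < b + 1 by linarith)
  have h3 := Real.Gamma_pos_of_pos (show 0 < a + b + 2 by linarith)
  have h4 := Real.rpow_pos_of_pos hs (a + b + 1)
  have : 0 < s ^ (a + b + 1) *
      (Real.Gamma (a + 1) * Real.Gamma (b + 1) / Real.Gamma (a + b + 2)) := by positivity
  linarith

lemma integral_symKer {s a b : ℝ} (hs : 0 < s) (ha : -1 < a) (hb : -1 < b) :
    ∫ t in Set.Ioo 0 s, symKer s a b t = 2 * (s ^ (a + b + 1) *
      (Real.Gamma (a + 1) * Real.Gamma (b + 1) / Real.Gamma (a + b + 2))) := by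
  simp only [symKer]
  rw [integral_add (integrableOn_Ioo_beta hs ha hb) (integrableOn_Ioo_beta hs hb ha),
    integral_Ioo_beta hs ha hb, integral_Ioo_beta hs hb ha, add_comm b a]
  ring

/-- If `H` is symmetric about `s / 2` and increasing towards `s / 2`, its average against the
beta kernel increases when the exponents are brought closer together with their sum fixed. -/
lemma beta_weighted_le {s a₁ a₂ b₁ b₂ : ℝ} (hs : 0 < s) (hsum : a₁ + a₂ = b₁ + b₂)
    (ha : a₂ ≤ a₁) (hab : a₁ ≤ b₁) (hb : -1 < b₂) {H : ℝ → ℝ} (hHc : ContinuousOn H (Set.Ioo 0 s))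
    (hH0 : ∀ t ∈ Set.Ioo 0 s, 0 ≤ H t)
    (hHs : ∀ t, H (s - t) = H t)
    (hHm : ∀ u v, 0 < v → v ≤ u → u ≤ s - v → H v ≤ H u) :
    (∫ t in Set.Ioo 0 s, t ^ b₁ * (s - t) ^ b₂ * H t) /
        (Real.Gamma (b₁ + 1) * Real.Gamma (b₂ + 1)) ≤
      (∫ t in Set.Ioo 0 s, t ^ a₁ * (s - t) ^ a₂ * H t) /
        (Real.Gamma (a₁ + 1) * Real.Gamma (a₂ + 1)) := by
  have ha1 : -1 < a₁ := by linarith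
  have ha2 : -1 < a₂ := by linarith
  have hb1 : -1 < b₁ := by linarith
  have hbd : ∀ t ∈ Set.Ioo 0 s, H t ≤ H (s / 2) := by
    intro t ht
    rcases le_total t (s / 2) with h | h
    · exact hHm _ _ ht.1 h (by linarith)
    · rw [← hHs t]
      exact hHm _ _ (by linarith [ht.2]) (by linarith) (by linarith)
  have hmem : ∀ᵐ t ∂(volume.restrict (Set.Ioo 0 s)), t ∈ Set.Ioo 0 s :=
    ae_restrict_mem measurableSet_Ioo
  have hmulH : ∀ {A : ℝ → ℝ}, IntegrableOn A (Set.Ioo 0 s) →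
      IntegrableOn (fun t => A t * H t) (Set.Ioo 0 s) := by
    intro A hA
    refine Integrable.mul_bdd (c := H (s / 2)) hA (hHc.aestronglyMeasurable measurableSet_Ioo) ?_
    filter_upwards [hmem] with t ht
    rw [Real.norm_eq_abs, abs_of_nonneg (hH0 t ht)]
    exact hbd t ht
  have hsym : ∀ {a b : ℝ}, -1 < a → -1 < b → IntegrableOn (symKer s a b) (Set.Ioo 0 s) :=
    fun h1 h2 => (integrableOn_Ioo_beta hs h1 h2).add (integrableOn_Ioo_beta hs h2 h1)
  have hsymH : ∀ {a b : ℝ}, -1 < a → -1 < b → ∫ t in Set.Ioo 0 s, symKer s a b t * H t =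
      2 * ∫ t in Set.Ioo 0 s, t ^ a * (s - t) ^ b * H t := by
    intro a b h1 h2
    have e := integral_Ioo_reflect s (fun t => t ^ a * (s - t) ^ b * H t)
    simp only [hHs, sub_sub_cancel] at e
    simp only [symKer, add_mul]
    rw [integral_add (hmulH (integrableOn_Ioo_beta hs h1 h2))
      (hmulH (integrableOn_Ioo_beta hs h2 h1))]
    rw [two_mul]
    congr 1
    rw [← e]
    simp only [mul_comm]
  have key := chebyshev (A := symKer s a₁ a₂) (B := symKer s b₁ b₂) (H := H) hmem
    (hsym ha1 ha2) (hsym hb1 hb) (hmulH (hsym ha1 ha2)) (hmulH (hsym hb1 hb)) ?_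
  · rw [hsymH ha1 ha2, hsymH hb1 hb, integral_symKer hs ha1 ha2, integral_symKer hs hb1 hb,
      hsum] at key
    have g1 := Real.Gamma_pos_of_pos (show 0 < a₁ + 1 by linarith)
    have g2 := Real.Gamma_pos_of_pos (show 0 < a₂ + 1 by linarith)
    have g3 := Real.Gamma_pos_of_pos (show 0 < b₁ + 1 by linarith)
    have g4 := Real.Gamma_pos_of_pos (show 0 < b₂ + 1 by linarith)
    have g5 := Real.Gamma_pos_of_pos (show 0 < b₁ + b₂ + 2 by linarith)
    have g6 := Real.rpow_pos_of_pos hs (b₁ + b₂ + 1)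
    rw [div_le_div_iff₀ (by positivity) (by positivity)]
    have hC : 0 < 4 * (s ^ (b₁ + b₂ + 1) / Real.Gamma (b₁ + b₂ + 2)) := by positivity
    refine le_of_mul_le_mul_left ?_ hC
    refine le_trans (le_of_eq ?_) (key.trans (le_of_eq ?_)) <;> ring
  · -- Up to reflecting one point and exchanging the two, `u` is the point nearer to `s / 2`.
    have main : ∀ u v, 0 < v → v ≤ u → u ≤ s - v →
        0 ≤ (symKer s a₁ a₂ u * symKer s b₁ b₂ v - symKer s a₁ a₂ v * symKer s b₁ b₂ u) *
          (H u - H v) := fun u v h1 h2 h3 =>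
      mul_nonneg (sub_nonneg.2 (symKer_ratio hsum ha hab h1 h2 h3))
        (sub_nonneg.2 (hHm u v h1 h2 h3))
    have swap : ∀ u v, 0 ≤ (symKer s a₁ a₂ v * symKer s b₁ b₂ u -
          symKer s a₁ a₂ u * symKer s b₁ b₂ v) * (H v - H u) →
        0 ≤ (symKer s a₁ a₂ u * symKer s b₁ b₂ v - symKer s a₁ a₂ v * symKer s b₁ b₂ u) *
          (H u - H v) := fun u v h => by linarith
    intro u hu v hv
    rcases le_total v u with h | h <;> rcases le_total u (s - v) with h' | h'
    · exact main u v hv.1 h h'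
    · refine swap u v ?_
      have := main v (s - u) (by linarith [hu.2]) (by linarith) (by linarith)
      simpa only [symKer_symm, hHs] using this
    · exact swap u v (main v u hu.1 h (by linarith))
    · have := main u (s - v) (by linarith [hv.2]) (by linarith) (by linarith)
      simpa only [symKer_symm, hHs] using this

/-! ### Laplace transforms -/

/-- `F_p` divided by `Γ(p - θ + 1)`; in terms of these the constant `λ` disappears. -/
noncomputable def normLap (f : ℝ → ℝ) (θ p x : ℝ) : ℝ := LapF f p x / Real.Gamma (p - θ + 1)

/-- The convolution on `(0, ∞)` of `t ^ p f(t)` and `t ^ q f(t)`, i.e. the density whose Laplace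
transform is `F_p F_q`. -/
noncomputable def convDens (f : ℝ → ℝ) (p q s : ℝ) : ℝ :=
  ∫ t in (0 : ℝ)..s, (t ^ p * f t) * ((s - t) ^ q * f (s - t))

lemma convDens_laplace_aux (f : ℝ → ℝ) (p q x s : ℝ) :
    ∫ t in (0 : ℝ)..s, (ContinuousLinearMap.mul ℝ ℝ (t ^ p * f t * Real.exp (-x * t)))
      ((s - t) ^ q * f (s - t) * Real.exp (-x * (s - t))) =
      Real.exp (-x * s) * convDens f p q s := by
  rw [convDens, ← intervalIntegral.integral_const_mul]
  congr 1
  funext t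
  rw [ContinuousLinearMap.mul_apply', show -x * s = -x * t + -x * (s - t) by ring, Real.exp_add]
  ring

lemma integrableOn_convDens {f : ℝ → ℝ} {p q x : ℝ}
    (hp : IntegrableOn (fun t => t ^ p * f t * Real.exp (-x * t)) (Set.Ioi 0))
    (hq : IntegrableOn (fun t => t ^ q * f t * Real.exp (-x * t)) (Set.Ioi 0)) :
    IntegrableOn (fun s => Real.exp (-x * s) * convDens f p q s) (Set.Ioi 0) := by
  have h := integrable_posConvolution hp hq (ContinuousLinearMap.mul ℝ ℝ)
  rw [posConvolution, integrable_indicator_iff measurableSet_Ioi] at h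
  simpa only [convDens_laplace_aux] using h

lemma integral_convDens {f : ℝ → ℝ} {p q x : ℝ}
    (hp : IntegrableOn (fun t => t ^ p * f t * Real.exp (-x * t)) (Set.Ioi 0))
    (hq : IntegrableOn (fun t => t ^ q * f t * Real.exp (-x * t)) (Set.Ioi 0)) :
    ∫ s in Set.Ioi 0, Real.exp (-x * s) * convDens f p q s = LapF f p x * LapF f q x := by
  have h := integral_posConvolution hp hq (ContinuousLinearMap.mul ℝ ℝ)
  simp_rw [convDens_laplace_aux] at h
  rw [h, ContinuousLinearMap.mul_apply']
  rfl

lemma convDens_eq {f : ℝ → ℝ} (θ p q : ℝ) {s : ℝ} (hs : 0 < s) :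
    convDens f p q s = ∫ t in Set.Ioo 0 s, t ^ (p - θ) * (s - t) ^ (q - θ) *
      ((t ^ θ * f t) * ((s - t) ^ θ * f (s - t))) := by
  rw [convDens, intervalIntegral.integral_of_le hs.le, integral_Ioc_eq_integral_Ioo]
  refine setIntegral_congr_fun measurableSet_Ioo fun t ht => ?_
  have h1 : t ^ p = t ^ (p - θ) * t ^ θ := by rw [← Real.rpow_add ht.1]; simp
  have h2 : (s - t) ^ q = (s - t) ^ (q - θ) * (s - t) ^ θ := by
    rw [← Real.rpow_add (by linarith [ht.2])]; simp
  simp only [h1, h2]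
  ring

/-- For log-concave `g`, the product `g u * g (s - u)` increases as `u` approaches `s / 2`. -/
lemma mul_reflect_mono {g : ℝ → ℝ} (hg : ∀ t > 0, 0 < g t)
    (hc : ConcaveOn ℝ (Set.Ioi 0) (fun t => Real.log (g t))) {s u v : ℝ} (hv : 0 < v)
    (hvu : v ≤ u) (hus : u ≤ s - v) : g v * g (s - v) ≤ g u * g (s - u) := by
  have hu : 0 < u := by linarith
  have hsv : 0 < s - v := by linarith
  have hsu : 0 < s - u := by linarith
  rcases hvu.eq_or_lt with rfl | hlt
  · exact le_rfl
  have hd : 0 < s - v - v := by linarith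
  -- `u = (1 - w) v + w (s - v)` and `s - u = w v + (1 - w) (s - v)`
  set w := (u - v) / (s - v - v) with hw
  have hw0 : 0 ≤ w := div_nonneg (by linarith) hd.le
  have hw1 : w ≤ 1 := (div_le_one hd).2 (by linarith)
  have hwe : w * (s - v - v) = u - v := div_mul_cancel₀ _ hd.ne'
  have c1 := hc.2 (mem_Ioi.2 hv) (mem_Ioi.2 hsv) (sub_nonneg.2 hw1) hw0 (by ring)
  have c2 := hc.2 (mem_Ioi.2 hv) (mem_Ioi.2 hsv) hw0 (sub_nonneg.2 hw1) (by ring)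
  simp only [smul_eq_mul] at c1 c2
  rw [show (1 - w) * v + w * (s - v) = u by linarith] at c1
  rw [show w * v + (1 - w) * (s - v) = s - u by linarith] at c2
  rw [← Real.log_le_log_iff (mul_pos (hg v hv) (hg _ hsv)) (mul_pos (hg u hu) (hg _ hsu)),
    Real.log_mul (hg v hv).ne' (hg _ hsv).ne', Real.log_mul (hg u hu).ne' (hg _ hsu).ne']
  linarith

section
variable {f : ℝ → ℝ} {θ : ℝ}

lemma normLap_cm (hfpos : ∀ t > 0, 0 < f t) {p : ℝ} (hp : θ - 1 < p)
    (hi : ∀ x > 0, IntegrableOn (fun t => t ^ p * f t * Real.exp (-x * t)) (Set.Ioi 0)) :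
    CompletelyMonotonicOn (normLap f θ p) := by
  have h1 : CompletelyMonotonicOn (LapF f p) := by
    refine .of_laplace (K := fun t => t ^ p * f t) (fun s hs => ?_) (fun x hx => ?_)
      (fun x hx => ?_)
    · exact mul_nonneg (Real.rpow_nonneg hs.le _) (hfpos s hs).le
    · simpa only [mul_comm] using hi x hx
    · simp only [LapF, mul_comm]
  refine (h1.mul (.const (inv_nonneg.2 (Real.Gamma_pos_of_pos
    (show 0 < p - θ + 1 by linarith)).le))).congr fun x _ => ?_
  rw [normLap, div_eq_mul_inv]

/-- The case of two factors. The density of the difference is nonnegative by `beta_weighted_le`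
applied with `H t = g t * g (s - t)`, where `g t = t ^ θ * f t`. -/
lemma normLap_pair_cm (hfc : ContinuousOn f (Set.Ioi 0)) (hfpos : ∀ t > 0, 0 < f t)
    (hlogconc : ConcaveOn ℝ (Set.Ioi 0) (fun t => Real.log (t ^ θ * f t))) {J : Set ℝ}
    (hi : ∀ p ∈ J, ∀ x > 0,
      IntegrableOn (fun t => t ^ p * f t * Real.exp (-x * t)) (Set.Ioi 0))
    {p₁ p₂ q₁ q₂ : ℝ} (hp₁ : p₁ ∈ J) (hp₂ : p₂ ∈ J) (hq₁ : q₁ ∈ J) (hq₂ : q₂ ∈ J)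
    (hq : θ - 1 < q₂) (hp : p₂ ≤ p₁) (hpq : p₁ ≤ q₁) (hsum : p₁ + p₂ = q₁ + q₂) :
    CompletelyMonotonicOn
      (fun x => normLap f θ p₁ x * normLap f θ p₂ x - normLap f θ q₁ x * normLap f θ q₂ x) := by
  set Gp := Real.Gamma (p₁ - θ + 1) * Real.Gamma (p₂ - θ + 1) with hGp
  set Gq := Real.Gamma (q₁ - θ + 1) * Real.Gamma (q₂ - θ + 1) with hGq
  refine .of_laplace (K := fun s => convDens f p₁ p₂ s / Gp - convDens f q₁ q₂ s / Gq)
    (fun s hs => ?_) (fun x hx => ?_) (fun x hx => ?_)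
  · rw [sub_nonneg, convDens_eq θ _ _ hs, convDens_eq θ _ _ hs]
    have hg : ∀ t > 0, 0 < t ^ θ * f t := fun t ht =>
      mul_pos (Real.rpow_pos_of_pos ht _) (hfpos t ht)
    have hgc : ContinuousOn (fun t => t ^ θ * f t) (Set.Ioi 0) :=
      (continuousOn_id.rpow_const fun t ht => Or.inl (ne_of_gt ht)).mul hfc
    refine beta_weighted_le (H := fun t => (t ^ θ * f t) * ((s - t) ^ θ * f (s - t))) hs
      (by linarith) (by linarith) (by linarith) (by linarith) ?_ ?_ ?_ ?_
    · refine (hgc.mono fun t ht => ht.1).mul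
        (hgc.comp (f := fun t => s - t) (by fun_prop) fun t ht => ?_)
      exact mem_Ioi.2 (sub_pos.2 ht.2)
    · exact fun t ht => (mul_pos (hg t ht.1) (hg _ (sub_pos.2 ht.2))).le
    · intro t
      simp only [sub_sub_cancel]
      ring
    · exact fun u v h1 h2 h3 => mul_reflect_mono hg hlogconc h1 h2 h3
  · refine (((integrableOn_convDens (hi _ hp₁ x hx) (hi _ hp₂ x hx)).div_const Gp).sub
      ((integrableOn_convDens (hi _ hq₁ x hx) (hi _ hq₂ x hx)).div_const Gq)).congr
      (ae_of_all _ fun s => ?_)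
    simp only [Pi.sub_apply]
    ring
  · have e : ∀ s, Real.exp (-x * s) * (convDens f p₁ p₂ s / Gp - convDens f q₁ q₂ s / Gq) =
        Real.exp (-x * s) * convDens f p₁ p₂ s / Gp -
          Real.exp (-x * s) * convDens f q₁ q₂ s / Gq := fun s => by ring
    simp only [e]
    rw [integral_sub ((integrableOn_convDens (hi _ hp₁ x hx) (hi _ hp₂ x hx)).div_const Gp)
      ((integrableOn_convDens (hi _ hq₁ x hx) (hi _ hq₂ x hx)).div_const Gq),
      integral_div, integral_div, integral_convDens (hi _ hp₁ x hx) (hi _ hp₂ x hx),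
      integral_convDens (hi _ hq₁ x hx) (hi _ hq₂ x hx), hGp, hGq]
    simp only [normLap]
    rw [div_mul_div_comm, div_mul_div_comm]

end

/-- The case of `n` factors, reduced to `normLap_pair_cm` one transfer at a time. -/
lemma normLap_prod_cm {f : ℝ → ℝ} {θ : ℝ}
    (hfc : ContinuousOn f (Set.Ioi 0)) (hfpos : ∀ t > 0, 0 < f t)
    (hlogconc : ConcaveOn ℝ (Set.Ioi 0) (fun t => Real.log (t ^ θ * f t))) {J : Set ℝ}
    (hJ : J.OrdConnected) (hJθ : ∀ r ∈ J, θ - 1 < r)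
    (hi : ∀ p ∈ J, ∀ x > 0,
      IntegrableOn (fun t => t ^ p * f t * Real.exp (-x * t)) (Set.Ioi 0))
    {n : ℕ} {p q : Fin n → ℝ} (hqJ : ∀ j, q j ∈ J) (hmaj : Majorizes p q) :
    CompletelyMonotonicOn
      (fun x => ∏ j, normLap f θ (p j) x - ∏ j, normLap f θ (q j) x) := by
  obtain ⟨hp, -, hpart, htot, -⟩ := hmaj
  refine majorization_induction (P := fun q => (∀ j, q j ∈ J) → CompletelyMonotonicOn
      (fun x => ∏ j, normLap f θ (p j) x - ∏ j, normLap f θ (q j) x)) hp ?_ ?_ _ q le_rfl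
      hpart htot hqJ
  · intro _
    simpa using CompletelyMonotonicOn.const le_rfl
  · intro q j k r s hjk hs hsr hr hsum ih hq
    set q' := Function.update (Function.update q j r) k s with hq'
    have hqj : q' j = r := by simp [hq', Function.update_of_ne hjk]
    have hqk : q' k = s := by simp [hq']
    have hqo : ∀ i, i ≠ j → i ≠ k → q' i = q i := fun i h1 h2 => by
      simp [hq', Function.update_of_ne h1, Function.update_of_ne h2]
    have hrJ : r ∈ J := hJ.out (hq k) (hq j) ⟨hs.trans hsr, hr⟩
    have hsJ : s ∈ J := hJ.out (hq k) (hq j) ⟨hs, hsr.trans hr⟩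
    have hq'J : ∀ i, q' i ∈ J := by
      intro i
      by_cases h1 : i = j
      · rwa [h1, hqj]
      · by_cases h2 : i = k
        · rwa [h2, hqk]
        · rw [hqo i h1 h2]; exact hq i
    set T := (Finset.univ.erase j).erase k with hT
    have hsplit : ∀ φ : Fin n → ℝ, ∏ i, φ i = φ j * φ k * ∏ i ∈ T, φ i := by
      intro φ
      rw [mul_assoc, Finset.mul_prod_erase _ _ (by simp [hjk.symm]),
        Finset.mul_prod_erase _ _ (Finset.mem_univ j)]
    have hpair := normLap_pair_cm hfc hfpos hlogconc hi hrJ hsJ (hq j) (hq k) (hJθ _ (hq k))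
      hsr hr hsum
    refine ((ih hq'J).add (hpair.mul (CompletelyMonotonicOn.prod T
      (h := fun i => normLap f θ (q i)) fun i _ => normLap_cm hfpos (hJθ _ (hq i)) (hi _ (hq i)))
      )).congr fun x _ => ?_
    rw [hsplit (fun i => normLap f θ (q' i) x), hsplit (fun i => normLap f θ (q i) x), hqj, hqk]
    have : ∏ i ∈ T, normLap f θ (q' i) x = ∏ i ∈ T, normLap f θ (q i) x := by
      refine Finset.prod_congr rfl fun i hi => ?_
      simp only [hT, Finset.mem_erase, Finset.mem_univ, and_true] at hi
      rw [hqo i hi.2 hi.1]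
    rw [this]
    ring

theorem stmt0 (I : Set ℝ) (hI : I.OrdConnected) (f : ℝ → ℝ)
    (hfc : ContinuousOn f (Set.Ioi 0)) (hfpos : ∀ t > 0, 0 < f t)
    (hconv : ∀ p ∈ I, ∀ x > 0,
      IntegrableOn (fun t => t ^ p * f t * Real.exp (-x * t)) (Set.Ioi 0))
    (M c : ℝ) (hM : 0 < M) (hc : 0 ≤ c)
    (hbound : ∀ p ∈ I, ∀ t > 0, 0 < t ^ p * f t ∧ t ^ p * f t ≤ M * Real.exp (c * t))
    (n : ℕ) (hn : 2 ≤ n) (p q : Fin n → ℝ)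
    (hpI : ∀ j, p j ∈ I) (hqI : ∀ j, q j ∈ I)
    (hmaj : Majorizes p q)
    (θ : ℝ) (hθ : θ < 1 + min (p ⟨n - 1, by omega⟩) (q ⟨n - 1, by omega⟩))
    (hlogconc : ConcaveOn ℝ (Set.Ioi 0) (fun t => Real.log (t ^ θ * f t))) :
    CompletelyMonotonicOn (fun x =>
      ∏ j, LapF f (p j) x -
        (∏ j, Real.Gamma (p j - θ + 1) / Real.Gamma (q j - θ + 1)) * ∏ j, LapF f (q j) x) := by
  obtain ⟨hp, hq, -, -, -⟩ := id hmaj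
  have hlast : ∀ j : Fin n, j ≤ ⟨n - 1, by omega⟩ := fun j => Fin.mk_le_mk.2 (by omega)
  have hpθ : ∀ j, θ - 1 < p j := fun j => by
    have := hp j _ (hlast j)
    have := min_le_left (p ⟨n - 1, by omega⟩) (q ⟨n - 1, by omega⟩)
    linarith
  have hqθ : ∀ j, θ - 1 < q j := fun j => by
    have := hq j _ (hlast j)
    have := min_le_right (p ⟨n - 1, by omega⟩) (q ⟨n - 1, by omega⟩)
    linarith
  have hGp : ∀ j, 0 < Real.Gamma (p j - θ + 1) := fun j =>
    Real.Gamma_pos_of_pos (by linarith [hpθ j])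
  have key := normLap_prod_cm hfc hfpos hlogconc (J := I ∩ Set.Ioi (θ - 1))
    (hI.inter Set.ordConnected_Ioi) (fun r hr => hr.2) (fun r hr => hconv r hr.1)
    (fun j => ⟨hqI j, hqθ j⟩) hmaj
  refine ((CompletelyMonotonicOn.const (a := ∏ j, Real.Gamma (p j - θ + 1))
    (Finset.prod_nonneg fun j _ => (hGp j).le)).mul key).congr
    (fun x _ => ?_)
  have hne : ∏ j, Real.Gamma (p j - θ + 1) ≠ 0 := Finset.prod_ne_zero_iff.2 fun j _ => (hGp j).ne'
  simp only [normLap, Finset.prod_div_distrib]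
  field_simp
end

section
/- Let n ≥ 2 and let the n-tuples p = (p₁,…,pₙ) and q = (q₁,…,qₙ) ∈ (0,∞)ⁿ satisfy p ≺ q. Then the functions x ↦ ∏_{j=1}^n ψ_{p_j}(x) − (∏_{j=1}^n Γ(p_j)/Γ(q_j)) ∏_{j=1}^n ψ_{q_j}(x) and x ↦ (∏_{j=1}^n Γ(p_j+1)/Γ(q_j+1)) ∏_{j=1}^n ψ_{q_j}(x) − ∏_{j=1}^n ψ_{p_j}(x) are both completely monotonic on (0,∞). -/
/-!
Write `ψ_a(x) = ∫₀^∞ k_a(t) e^{-xt} dt` with `k_a(t) = t^a / (1 - e^{-t})`. Then `ψ_a ψ_b` is the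
Laplace transform of the convolution `(k_a ∗ k_b)(r) = ∫₀^r k_a(s) k_b(r - s) ds`, and the Laplace
transform of a nonnegative density is completely monotonic (`cm_laplace`, where differentiation
under the integral is that of a moment-generating function).

Two entries. Let `a + b = A + B` and `0 < B ≤ b ≤ a ≤ A`. The integrand of `k_a ∗ k_b` is a Beta
density times a weight:
`s^{a-1} (r-s)^{b-1} · w(s) w(r-s)` with `w(s) = s / (1 - e^{-s})`, or
`s^a (r-s)^b · v(s) v(r-s)` with `v(s) = 1 / (1 - e^{-s})`.
After symmetrization under `s ↔ r - s`, the ratio of the `(a, b)` to the `(A, B)` Beta density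
decreases as `s` moves away from `r/2` (`rpow_sym_cross`: put `y = log ((r-s)/s)`, so that the
densities become multiples of `cosh ((a-b) y / 2)` and `cosh ((A-B) y / 2)`). The weight
`w(s) w(r-s)` also decreases away from `r/2` (`weight_anti`, from convexity of `u ↦ cosh √u`),
whereas `v(s) v(r-s)` increases (`one_sub_exp_mul_anti`). Chebyshev's integral inequality
(`beta_chebyshev`) then compares `k_a ∗ k_b` with `k_A ∗ k_B`; the total masses of the Beta
densities give the factors `Γ(a)Γ(b)` in the first case and `Γ(a+1)Γ(b+1)` in the second.

General tuples. If `p ≺ q`, then `p` is reached from `q` by finitely many transfers, each moving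
mass from a larger to a smaller entry without reversing their order (`transfer_induction`). With
`ψ_a` normalized by `Γ(a)`, respectively `Γ(a+1)`, each transfer changes the product by a two-entry
difference times a product of completely monotonic functions, and sums and products of completely
monotonic functions are completely monotonic.
-/

open Real MeasureTheory Set

/-- `ψ_p(x) = ∫₀^∞ t^p/(1 - e^{-t}) · e^{-xt} dt`, the "extended polygamma function". -/
noncomputable def psiP (p x : ℝ) : ℝ :=
  ∫ t in Set.Ioi (0 : ℝ), t ^ p / (1 - Real.exp (-t)) * Real.exp (-x * t)

namespace CMPsi

/-! ### Completely monotonic functions -/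

lemma cm_of_deriv {h : ℝ → ℝ} (h1 : ContDiffOn ℝ (⊤ : ℕ∞) h (Ioi 0))
    (h2 : ∀ (m : ℕ) (x : ℝ), 0 < x → 0 ≤ (-1 : ℝ) ^ m * iteratedDeriv m h x) :
    CompletelyMonotonicOn h := by
  refine ⟨h1, fun m x hx => ?_⟩
  rw [iteratedDerivWithin_of_isOpen isOpen_Ioi (mem_Ioi.2 hx)]
  exact h2 m x hx

lemma cm_congr {f g : ℝ → ℝ} (hf : CompletelyMonotonicOn f) (h : ∀ x, 0 < x → g x = f x) :
    CompletelyMonotonicOn g := by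
  have h' : EqOn g f (Ioi 0) := fun x hx => h x hx
  refine ⟨hf.1.congr h', fun m x hx => ?_⟩
  rw [iteratedDerivWithin_congr h' (mem_Ioi.2 hx)]
  exact hf.2 m x hx

lemma cm_contDiffWithinAt {f : ℝ → ℝ} (hf : CompletelyMonotonicOn f) (m : ℕ) {x : ℝ}
    (hx : 0 < x) : ContDiffWithinAt ℝ m f (Ioi 0) x :=
  (hf.1 x hx).of_le (by exact_mod_cast le_top)

lemma cm_add {f g : ℝ → ℝ} (hf : CompletelyMonotonicOn f) (hg : CompletelyMonotonicOn g) :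
    CompletelyMonotonicOn (fun x => f x + g x) := by
  refine ⟨hf.1.add hg.1, fun m x hx => ?_⟩
  rw [iteratedDerivWithin_fun_add (mem_Ioi.2 hx) isOpen_Ioi.uniqueDiffOn
    (cm_contDiffWithinAt hf m hx) (cm_contDiffWithinAt hg m hx), mul_add]
  exact add_nonneg (hf.2 m x hx) (hg.2 m x hx)

lemma cm_mul {f g : ℝ → ℝ} (hf : CompletelyMonotonicOn f) (hg : CompletelyMonotonicOn g) :
    CompletelyMonotonicOn (fun x => f x * g x) := by
  refine ⟨hf.1.mul hg.1, fun m x hx => ?_⟩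
  have := iteratedDerivWithin_mul (mem_Ioi.2 hx) isOpen_Ioi.uniqueDiffOn
    (cm_contDiffWithinAt hf m hx) (cm_contDiffWithinAt hg m hx)
  change 0 ≤ (-1 : ℝ) ^ m * iteratedDerivWithin m (f * g) (Ioi 0) x
  rw [this, Finset.mul_sum]
  refine Finset.sum_nonneg fun i hi => ?_
  have hi' : i ≤ m := by simpa [Nat.lt_succ_iff] using hi
  have e : (-1 : ℝ) ^ m = (-1) ^ i * (-1) ^ (m - i) := by rw [← pow_add]; congr 1; omega
  rw [e, show ∀ a b c d k : ℝ, a * b * (k * c * d) = k * ((a * c) * (b * d)) by intros; ring]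
  exact mul_nonneg (Nat.cast_nonneg _) (mul_nonneg (hf.2 i x hx) (hg.2 (m - i) x hx))

lemma cm_const {c : ℝ} (hc : 0 ≤ c) : CompletelyMonotonicOn (fun _ => c) := by
  refine ⟨contDiffOn_const, fun m x hx => ?_⟩
  rw [iteratedDerivWithin_const]
  split_ifs with h
  · simpa [h] using hc
  · simp

lemma cm_prod {ι : Type*} (s : Finset ι) (f : ι → ℝ → ℝ)
    (hf : ∀ i ∈ s, CompletelyMonotonicOn (f i)) :
    CompletelyMonotonicOn (fun x => ∏ i ∈ s, f i x) := by
  classical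
  induction s using Finset.induction_on with
  | empty => simpa using cm_const zero_le_one
  | insert a s ha ih =>
    simp only [Finset.prod_insert ha]
    exact cm_mul (hf a (by simp)) (ih fun i hi => hf i (by simp [hi]))

/-- The Laplace transform of a nonnegative density is completely monotonic. It is the
moment-generating function of `t ↦ -t` under the measure with density `D`, which need not be finite. -/
lemma cm_laplace {D h : ℝ → ℝ} (hD : ∀ t, 0 < t → 0 ≤ D t)
    (hint : ∀ x, 0 < x → IntegrableOn (fun t => D t * exp (-x * t)) (Ioi 0))
    (hh : ∀ x, 0 < x → h x = ∫ t in Ioi 0, D t * exp (-x * t)) :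
    CompletelyMonotonicOn h := by
  have hDm : AEMeasurable D (volume.restrict (Ioi 0)) := by
    have h1 := (hint 1 one_pos).aestronglyMeasurable.aemeasurable.mul
      (by fun_prop : Measurable fun t : ℝ => exp t).aemeasurable
    refine h1.congr (Filter.Eventually.of_forall fun t => ?_)
    simp [mul_assoc, ← exp_add]
  set μ : Measure ℝ := (volume.restrict (Ioi 0)).withDensity (fun t => ENNReal.ofReal (D t))
    with hμ
  have hfm : AEMeasurable (fun t => ENNReal.ofReal (D t)) (volume.restrict (Ioi 0)) :=
    hDm.ennreal_ofReal
  have hlt : ∀ᵐ t ∂(volume.restrict (Ioi (0:ℝ))), ENNReal.ofReal (D t) < ⊤ :=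
    Filter.Eventually.of_forall fun t => ENNReal.ofReal_lt_top
  have hμi : ∀ g : ℝ → ℝ, ∫ t, g t ∂μ = ∫ t in Ioi 0, D t * g t := by
    intro g
    rw [hμ, integral_withDensity_eq_integral_toReal_smul₀ hfm hlt]
    refine setIntegral_congr_fun measurableSet_Ioi fun t ht => ?_
    simp [ENNReal.toReal_ofReal (hD t ht)]
  have hsub : Ioi (0 : ℝ) ⊆ interior (ProbabilityTheory.integrableExpSet (fun t => -t) μ) := by
    refine interior_maximal (fun x hx => ?_) isOpen_Ioi
    rw [ProbabilityTheory.integrableExpSet, mem_ofPred_eq, hμ,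
      integrable_withDensity_iff_integrable_smul₀' hfm hlt]
    refine (integrableOn_congr_fun (fun t ht => ?_) measurableSet_Ioi).1 (hint x hx)
    simp [ENNReal.toReal_ofReal (hD t ht)]
  have hcm : CompletelyMonotonicOn (ProbabilityTheory.mgf (fun t => -t) μ) := by
    refine cm_of_deriv ((ProbabilityTheory.analyticOn_mgf.mono hsub).contDiffOn
      isOpen_Ioi.uniqueDiffOn) fun m x hx => ?_
    rw [ProbabilityTheory.iteratedDeriv_mgf (hsub hx), ← integral_const_mul, hμi]
    refine setIntegral_nonneg measurableSet_Ioi fun t ht => mul_nonneg (hD t ht) ?_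
    rw [← mul_assoc, ← mul_pow]
    have : 0 < t := ht
    have : (-1 * -t) = t := by ring
    rw [this]; positivity
  refine cm_congr hcm fun x hx => ?_
  rw [hh x hx, ProbabilityTheory.mgf, hμi]
  simp

/-! ### Majorization by successive transfers -/

/-- Hardy–Littlewood–Pólya: a reflexive and transitive relation that relates each positive tuple to
its transfers from `q j` to `q k` (not reversing their order) relates `p` to every `q` majorizing it.
Only `p` is assumed sorted, so that the transferred tuple need not be rearranged. The induction is
on a bound `N` for the number of entries at which `p` and `q` differ. -/
lemma transfer_induction {n : ℕ} (R : (Fin n → ℝ) → (Fin n → ℝ) → Prop)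
    (hrefl : ∀ p, (∀ i, 0 < p i) → R p p)
    (htrans : ∀ p q r, R p q → R q r → R p r)
    (hstep : ∀ (q : Fin n → ℝ) (j k : Fin n) (δ : ℝ), (∀ i, 0 < q i) → j ≠ k → 0 < δ →
      q k + δ ≤ q j - δ → R (Function.update (Function.update q j (q j - δ)) k (q k + δ)) q)
    (p : Fin n → ℝ) (hp : ∀ i, 0 < p i) (hanti : ∀ i j : Fin n, i ≤ j → p j ≤ p i) :
    ∀ (N : ℕ) (q : Fin n → ℝ), (∀ i, 0 < q i) →
      (Finset.univ.filter (fun i => p i ≠ q i)).card ≤ N →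
      (∀ k : Fin n, ∑ j ∈ Finset.univ.filter (fun j => j ≤ k), p j ≤
        ∑ j ∈ Finset.univ.filter (fun j => j ≤ k), q j) →
      ∑ j, p j = ∑ j, q j → R p q := by
  intro N
  induction N with
  | zero =>
    intro q hq hc _ _
    have : p = q := by
      funext i
      by_contra h
      have := Finset.card_pos.2 (⟨i, by simpa using h⟩ :
        (Finset.univ.filter (fun i => p i ≠ q i)).Nonempty)
      omega
    subst this
    exact hrefl p hp
  | succ N ih =>
    intro q hq hc hmaj hsum
    by_cases hpq : p = q
    · subst hpq; exact hrefl p hp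
    -- the first index at which `q` lies below `p`
    have hex : ∃ k, q k < p k := by
      by_contra! h
      exact hpq (funext fun i =>
        ((Finset.sum_eq_sum_iff_of_le fun i _ => h i).1 hsum) i (Finset.mem_univ i))
    obtain ⟨k, hk, hkmin⟩ : ∃ k, q k < p k ∧ ∀ i < k, p i ≤ q i := by
      have hne : (Finset.univ.filter (fun k => q k < p k)).Nonempty := by
        obtain ⟨k, hk⟩ := hex
        exact ⟨k, by simp [hk]⟩
      refine ⟨_, (Finset.mem_filter.1 (Finset.min'_mem _ hne)).2, fun i hi => ?_⟩
      by_contra! h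
      exact absurd (Finset.min'_le _ i (by simp [h])) (not_le.2 hi)
    obtain ⟨j, hjk, hj⟩ : ∃ j < k, p j < q j := by
      by_contra! h
      refine absurd (hmaj k) (not_le.2 (Finset.sum_lt_sum (fun i hi => ?_) ⟨k, by simp, hk⟩))
      rcases (Finset.mem_filter.1 hi).2.lt_or_eq with h' | rfl
      · exact h i h'
      · exact hk.le
    -- the largest transfer from `q j` to `q k` that overshoots neither `p j` nor `p k`
    set δ := min (q j - p j) (p k - q k) with hδ
    have hδ0 : 0 < δ := lt_min (by linarith) (by linarith)
    have hδ1 : δ ≤ q j - p j := min_le_left _ _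
    have hδ2 : δ ≤ p k - q k := min_le_right _ _
    have hpjk := hanti j k hjk.le
    have hjk' : j ≠ k := hjk.ne
    set q' := Function.update (Function.update q j (q j - δ)) k (q k + δ) with hq'
    have hq'k : q' k = q k + δ := by simp [hq']
    have hq'j : q' j = q j - δ := by simp [hq', hjk']
    have hq'i : ∀ i, i ≠ j → i ≠ k → q' i = q i := fun i h1 h2 => by simp [hq', h1, h2]
    have hq'e : ∀ i, q' i = q i - (if i = j then δ else 0) + (if i = k then δ else 0) := by
      intro i
      by_cases h1 : i = j
      · subst h1; simp [hq'j, hjk']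
      · by_cases h2 : i = k
        · subst h2; simp [hq'k, h1]
        · simp [hq'i i h1 h2, h1, h2]
    have hsum' : ∀ s : Finset (Fin n), ∑ i ∈ s, q' i =
        ∑ i ∈ s, q i - (if j ∈ s then δ else 0) + (if k ∈ s then δ else 0) := by
      intro s
      simp only [hq'e, Finset.sum_add_distrib, Finset.sum_sub_distrib, Finset.sum_ite_eq']
    refine htrans _ q' _ (ih q' ?_ ?_ ?_ ?_) (hstep q j k δ hq hjk' hδ0 (by linarith))
    · intro i
      by_cases h1 : i = j
      · subst h1; rw [hq'j]; linarith [hp i]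
      · by_cases h2 : i = k
        · subst h2; rw [hq'k]; linarith [hq i]
        · rw [hq'i i h1 h2]; exact hq i
    · -- one of the two altered entries now agrees with `p`, and no agreement is lost
      have hlt : Finset.univ.filter (fun i => p i ≠ q' i) ⊂
          Finset.univ.filter (fun i => p i ≠ q i) := by
        refine Finset.ssubset_iff_of_subset (fun i hi => ?_) |>.2 ?_
        · simp only [Finset.mem_filter, Finset.mem_univ, true_and] at hi ⊢
          by_cases h1 : i = j
          · subst h1; exact hj.ne
          · by_cases h2 : i = k
            · subst h2; exact hk.ne'
            · rwa [hq'i i h1 h2] at hi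
        · rcases min_choice (q j - p j) (p k - q k) with h | h
          · refine ⟨j, by simp [hj.ne], ?_⟩
            simp [hq'j, hδ, h]
          · refine ⟨k, by simp [hk.ne'], ?_⟩
            simp [hq'k, hδ, h]
      have := Finset.card_lt_card hlt
      omega
    · -- only the partial sums over `j ≤ l < k` drop, by `δ`; there every `q i - p i` is nonnegative
      -- and the `j`-th one is at least `δ`
      intro l
      rw [hsum']
      have := hmaj l
      by_cases h1 : k ≤ l
      · have h2 : j ≤ l := hjk.le.trans h1
        simp only [Finset.mem_filter, Finset.mem_univ, true_and, h1, h2, if_true]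
        linarith
      · by_cases h2 : j ≤ l
        · simp only [Finset.mem_filter, Finset.mem_univ, true_and, h1, h2, if_true, if_false]
          have h3 : q j - p j ≤ ∑ i ∈ Finset.univ.filter (fun i => i ≤ l), (q i - p i) := by
            refine Finset.single_le_sum (f := fun i => q i - p i) (fun i hi => ?_) (by simp [h2])
            have := hkmin i ((Finset.mem_filter.1 hi).2.trans_lt (not_le.1 h1))
            simpa using this
          rw [Finset.sum_sub_distrib] at h3
          linarith
        · simpa [h1, h2] using this
    · rw [hsum', hsum]; simp

/-! ### The symmetrized Beta density -/

lemma rpow_sym_eq {s s' : ℝ} (hs : 0 < s) (hs' : 0 < s') (a b : ℝ) :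
    s ^ (a - 1) * s' ^ (b - 1) + s' ^ (a - 1) * s ^ (b - 1) =
      exp ((log s + log s') * ((a + b) / 2 - 1)) *
        (2 * cosh ((a - b) / 2 * (log s' - log s))) := by
  simp only [rpow_def_of_pos hs, rpow_def_of_pos hs', cosh_eq, ← exp_add]
  rw [show ∀ x y z : ℝ, x * (2 * ((y + z) / 2)) = x * z + x * y by intros; ring, ← exp_add,
    ← exp_add]
  congr 2 <;> ring

/-- `cosh (ν y) / cosh (μ y)` is nondecreasing in `y ≥ 0` when `0 ≤ μ ≤ ν`. -/
lemma cosh_mul_cosh_le {μ ν y z : ℝ} (hμ : 0 ≤ μ) (hμν : μ ≤ ν) (hy : 0 ≤ y) (hyz : y ≤ z) :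
    cosh (μ * z) * cosh (ν * y) ≤ cosh (μ * y) * cosh (ν * z) := by
  have e : ∀ u v : ℝ, cosh u * cosh v = (cosh (u + v) + cosh (v - u)) / 2 := by
    intro u v; rw [cosh_add, cosh_sub]; ring
  have h1 : cosh (μ * z + ν * y) ≤ cosh (μ * y + ν * z) := by
    rw [cosh_le_cosh, abs_of_nonneg (by nlinarith [mul_nonneg hμ (hy.trans hyz)]),
      abs_of_nonneg (by nlinarith [mul_nonneg hμ hy, mul_nonneg (hμ.trans hμν) (hy.trans hyz)])]
    nlinarith
  have h2 : cosh (ν * y - μ * z) ≤ cosh (ν * z - μ * y) := by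
    have hp := mul_le_mul hμν hyz hy (hμ.trans hμν)
    rw [cosh_le_cosh, abs_of_nonneg (a := ν * z - μ * y) (by linarith)]
    refine abs_le.2 ⟨?_, ?_⟩ <;> nlinarith
  rw [e, e]; linarith

/-- The symmetrized `(a, b)` Beta density over the `(A, B)` one is larger at the central pair
`(s, s')` than at the outer pair `(t, t')`, in cross-multiplied form. -/
lemma rpow_sym_cross {a b A B s s' t t' : ℝ} (hba : b ≤ a) (haA : a ≤ A) (hab : a + b = A + B)
    (ht : 0 < t) (hts : t ≤ s) (hss : s ≤ s') (hst : s' ≤ t') :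
    (t ^ (a - 1) * t' ^ (b - 1) + t' ^ (a - 1) * t ^ (b - 1)) *
        (s ^ (A - 1) * s' ^ (B - 1) + s' ^ (A - 1) * s ^ (B - 1)) ≤
      (s ^ (a - 1) * s' ^ (b - 1) + s' ^ (a - 1) * s ^ (b - 1)) *
        (t ^ (A - 1) * t' ^ (B - 1) + t' ^ (A - 1) * t ^ (B - 1)) := by
  have hs : 0 < s := ht.trans_le hts
  have hs' : 0 < s' := hs.trans_le hss
  have ht' : 0 < t' := hs'.trans_le hst
  rw [rpow_sym_eq ht ht', rpow_sym_eq hs hs', rpow_sym_eq ht ht', rpow_sym_eq hs hs', ← hab]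
  have l1 := log_le_log ht hts
  have l2 := log_le_log hs hss
  have l3 := log_le_log hs' hst
  have := cosh_mul_cosh_le (μ := (a - b) / 2) (ν := (A - B) / 2) (y := log s' - log s)
    (z := log t' - log t) (by linarith) (by linarith) (by linarith) (by linarith)
  rw [show ∀ p q r s : ℝ, p * (2 * q) * (r * (2 * s)) = (4 * (p * r)) * (q * s) by intros; ring,
    show ∀ p q r s : ℝ, p * (2 * q) * (r * (2 * s)) = (4 * (r * p)) * (q * s) by intros; ring]
  exact mul_le_mul_of_nonneg_left this (by positivity)

lemma rpow_sym_cross' {a b A B r s t : ℝ} (hba : b ≤ a) (haA : a ≤ A) (hab : a + b = A + B)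
    (hs : s ∈ Ioo 0 r) (ht : t ∈ Ioo 0 r) (hst : |s - (r - s)| ≤ |t - (r - t)|) :
    (t ^ (a - 1) * (r - t) ^ (b - 1) + (r - t) ^ (a - 1) * t ^ (b - 1)) *
        (s ^ (A - 1) * (r - s) ^ (B - 1) + (r - s) ^ (A - 1) * s ^ (B - 1)) ≤
      (s ^ (a - 1) * (r - s) ^ (b - 1) + (r - s) ^ (a - 1) * s ^ (b - 1)) *
        (t ^ (A - 1) * (r - t) ^ (B - 1) + (r - t) ^ (A - 1) * t ^ (B - 1)) := by
  obtain ⟨hs0, hs1⟩ := hs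
  obtain ⟨ht0, ht1⟩ := ht
  rcases le_total s (r - s) with h1 | h1 <;> rcases le_total t (r - t) with h2 | h2
  · rw [abs_of_nonpos (by linarith), abs_of_nonpos (by linarith)] at hst
    exact rpow_sym_cross hba haA hab ht0 (by linarith) h1 (by linarith)
  · rw [abs_of_nonpos (by linarith), abs_of_nonneg (by linarith)] at hst
    have := rpow_sym_cross hba haA hab (sub_pos.2 ht1) (by linarith) h1
      (by linarith : r - s ≤ t)
    linarith
  · rw [abs_of_nonneg (by linarith), abs_of_nonpos (by linarith)] at hst
    have := rpow_sym_cross hba haA hab ht0 (by linarith) h1 (by linarith : s ≤ r - t)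
    linarith
  · rw [abs_of_nonneg (by linarith), abs_of_nonneg (by linarith)] at hst
    have := rpow_sym_cross hba haA hab (sub_pos.2 ht1) (by linarith) h1 (by linarith : s ≤ t)
    linarith

/-! ### Chebyshev's inequality for Beta densities -/

/-- Chebyshev's integral inequality: if `f / g` and `G` are monotone in the same sense, the `f`-mean
of `G` is at least its `g`-mean. Proved by integrating the hypothesis `h` over `μ.prod μ`. -/
lemma chebyshev {μ : Measure ℝ} [SFinite μ] {S : Set ℝ} (hS : ∀ᵐ s ∂μ, s ∈ S) {f g G : ℝ → ℝ}
    (hf : Integrable f μ) (hg : Integrable g μ)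
    (hfG : Integrable (fun s => f s * G s) μ) (hgG : Integrable (fun s => g s * G s) μ)
    (h : ∀ s ∈ S, ∀ t ∈ S, 0 ≤ (f s * g t - f t * g s) * (G s - G t)) :
    (∫ s, f s ∂μ) * ∫ s, g s * G s ∂μ ≤ (∫ s, f s * G s ∂μ) * ∫ s, g s ∂μ := by
  have h1 := hfG.mul_prod hg
  have h2 := hg.mul_prod hfG
  have h3 := hf.mul_prod hgG
  have h4 := hgG.mul_prod hf
  have hnn : 0 ≤ ∫ z, ((f z.1 * G z.1 * g z.2 + g z.1 * (f z.2 * G z.2)) -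
      (f z.1 * (g z.2 * G z.2) + g z.1 * G z.1 * f z.2)) ∂(μ.prod μ) := by
    refine integral_nonneg_of_ae ?_
    filter_upwards [Measure.quasiMeasurePreserving_fst.ae hS,
      Measure.quasiMeasurePreserving_snd.ae hS] with z hz1 hz2
    have := h _ hz1 _ hz2
    simp only [Pi.zero_apply]
    linarith
  have hsub := integral_sub (h1.add h2) (h3.add h4)
  have ha := integral_add h1 h2
  have hb := integral_add h3 h4
  simp only [Pi.add_apply] at hsub
  rw [hsub, ha, hb, integral_prod_mul (fun s => f s * G s) g,
    integral_prod_mul g (fun s => f s * G s), integral_prod_mul f (fun s => g s * G s),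
    integral_prod_mul (fun s => g s * G s) f] at hnn
  linarith

lemma beta_integral {a b r : ℝ} (ha : 0 < a) (hb : 0 < b) (hr : 0 < r) :
    ∫ s in Ioo 0 r, s ^ (a - 1) * (r - s) ^ (b - 1) =
      r ^ (a + b - 1) * (Real.Gamma a * Real.Gamma b / Real.Gamma (a + b)) := by
  have h := Complex.betaIntegral_scaled a b hr
  rw [Complex.betaIntegral_eq_Gamma_mul_div _ _ (by simpa) (by simpa)] at h
  rw [← integral_Ioc_eq_integral_Ioo, ← intervalIntegral.integral_of_le hr.le]
  rw [← Complex.ofReal_add a b, Complex.Gamma_ofReal, Complex.Gamma_ofReal,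
    Complex.Gamma_ofReal] at h
  apply Complex.ofReal_injective
  rw [← intervalIntegral.integral_ofReal]
  refine Eq.trans (intervalIntegral.integral_congr_uIoo fun s hs => ?_) (h.trans ?_)
  · rw [uIoo_of_le hr.le] at hs
    rw [Complex.ofReal_mul, Complex.ofReal_cpow hs.1.le, Complex.ofReal_cpow (by linarith [hs.2])]
    push_cast; rfl
  · rw [Complex.ofReal_mul, Complex.ofReal_cpow hr.le]
    push_cast; rfl

/-- The integral is nonzero by `beta_integral`, whereas that of a non-integrable function is the
junk value `0`. -/
lemma beta_integrable {a b r : ℝ} (ha : 0 < a) (hb : 0 < b) (hr : 0 < r) :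
    IntegrableOn (fun s => s ^ (a - 1) * (r - s) ^ (b - 1)) (Ioo 0 r) := by
  by_contra h
  have h1 := beta_integral ha hb hr
  rw [integral_undef h] at h1
  have := Real.Gamma_pos_of_pos ha
  have := Real.Gamma_pos_of_pos hb
  have := Real.Gamma_pos_of_pos (add_pos ha hb)
  exact absurd h1 (by positivity)

lemma reflect {r : ℝ} (hr : 0 < r) (f : ℝ → ℝ) :
    ∫ s in Ioo 0 r, f (r - s) = ∫ s in Ioo 0 r, f s := by
  rw [← integral_Ioc_eq_integral_Ioo, ← integral_Ioc_eq_integral_Ioo,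
    ← intervalIntegral.integral_of_le hr.le, ← intervalIntegral.integral_of_le hr.le,
    intervalIntegral.integral_comp_sub_left]
  simp

lemma reflect_integrable {r : ℝ} (hr : 0 < r) {f : ℝ → ℝ} (hf : IntegrableOn f (Ioo 0 r)) :
    IntegrableOn (fun s => f (r - s)) (Ioo 0 r) := by
  rw [← integrableOn_Ioc_iff_integrableOn_Ioo,
    ← intervalIntegrable_iff_integrableOn_Ioc_of_le hr.le] at hf ⊢
  simpa using (hf.comp_sub_left r).symm

/-- The `(a, b)` Beta mean of a symmetric weight `G` on `(0, r)` decreasing away from `r / 2` is at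
least its `(A, B)` Beta mean, since the latter distribution is more spread out. -/
lemma beta_chebyshev {G : ℝ → ℝ} {a b A B r : ℝ} (hr : 0 < r) (hB : 0 < B) (hBb : B ≤ b)
    (hba : b ≤ a) (haA : a ≤ A) (hab : a + b = A + B) (hsym : ∀ s, G (r - s) = G s)
    (hG : ∀ s ∈ Ioo 0 r, ∀ t ∈ Ioo 0 r, |s - (r - s)| ≤ |t - (r - t)| → G t ≤ G s)
    (hi1 : IntegrableOn (fun s => s ^ (a - 1) * (r - s) ^ (b - 1) * G s) (Ioo 0 r))
    (hi2 : IntegrableOn (fun s => s ^ (A - 1) * (r - s) ^ (B - 1) * G s) (Ioo 0 r)) :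
    (Real.Gamma a * Real.Gamma b) * ∫ s in Ioo 0 r, s ^ (A - 1) * (r - s) ^ (B - 1) * G s ≤
      (Real.Gamma A * Real.Gamma B) *
        ∫ s in Ioo 0 r, s ^ (a - 1) * (r - s) ^ (b - 1) * G s := by
  have hb : 0 < b := hB.trans_le hBb
  have ha : 0 < a := hb.trans_le hba
  have hA : 0 < A := ha.trans_le haA
  have e1 : ∀ c d s : ℝ, s ^ (c - 1) * (r - s) ^ (d - 1) + (r - s) ^ (c - 1) * s ^ (d - 1) =
      s ^ (c - 1) * (r - s) ^ (d - 1) + (r - s) ^ (c - 1) * (r - (r - s)) ^ (d - 1) := by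
    intros; rw [sub_sub_cancel]
  have e2 : ∀ c d s : ℝ,
      (s ^ (c - 1) * (r - s) ^ (d - 1) + (r - s) ^ (c - 1) * s ^ (d - 1)) * G s =
      s ^ (c - 1) * (r - s) ^ (d - 1) * G s +
        (r - s) ^ (c - 1) * (r - (r - s)) ^ (d - 1) * G (r - s) := by
    intros; rw [sub_sub_cancel, hsym]; ring
  have j : ∀ c d : ℝ, 0 < c → 0 < d →
      IntegrableOn (fun s => s ^ (c - 1) * (r - s) ^ (d - 1) + (r - s) ^ (c - 1) * s ^ (d - 1))
        (Ioo 0 r) ∧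
      ∫ s in Ioo 0 r, (s ^ (c - 1) * (r - s) ^ (d - 1) + (r - s) ^ (c - 1) * s ^ (d - 1)) =
        2 * (r ^ (c + d - 1) * (Real.Gamma c * Real.Gamma d / Real.Gamma (c + d))) := by
    intro c d hc hd
    have i1 := beta_integrable hc hd hr
    have i2 := reflect_integrable hr i1
    simp only [e1]
    refine ⟨i1.add i2, ?_⟩
    rw [integral_add i1 i2, reflect hr (fun s => s ^ (c - 1) * (r - s) ^ (d - 1)),
      beta_integral hc hd hr]
    ring
  have j' : ∀ c d : ℝ,
      IntegrableOn (fun s => s ^ (c - 1) * (r - s) ^ (d - 1) * G s) (Ioo 0 r) →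
      IntegrableOn (fun s => (s ^ (c - 1) * (r - s) ^ (d - 1) +
        (r - s) ^ (c - 1) * s ^ (d - 1)) * G s) (Ioo 0 r) ∧
      ∫ s in Ioo 0 r, (s ^ (c - 1) * (r - s) ^ (d - 1) +
        (r - s) ^ (c - 1) * s ^ (d - 1)) * G s =
        2 * ∫ s in Ioo 0 r, s ^ (c - 1) * (r - s) ^ (d - 1) * G s := by
    intro c d i1
    have i2 := reflect_integrable hr i1
    simp only [e2]
    refine ⟨i1.add i2, ?_⟩
    rw [integral_add i1 i2, reflect hr (fun s => s ^ (c - 1) * (r - s) ^ (d - 1) * G s)]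
    ring
  have key := chebyshev (μ := volume.restrict (Ioo 0 r)) (S := Ioo 0 r)
    (ae_restrict_mem measurableSet_Ioo) (j a b ha hb).1 (j A B hA hB).1
    (j' a b hi1).1 (j' A B hi2).1 ?_
  · rw [(j a b ha hb).2, (j A B hA hB).2, (j' a b hi1).2, (j' A B hi2).2, ← hab] at key
    have hg := Real.Gamma_pos_of_pos (add_pos ha hb)
    have hc : 0 < 4 * r ^ (a + b - 1) / Real.Gamma (a + b) := by positivity
    refine le_of_mul_le_mul_left ?_ hc
    calc _ = _ := ?_
      _ ≤ _ := key
      _ = _ := ?_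
    · field_simp; ring
    · field_simp; ring
  · intro s hs t ht
    rcases le_total |s - (r - s)| |t - (r - t)| with h | h
    · have h1 := hG s hs t ht h
      have h2 := rpow_sym_cross' hba haA hab hs ht h
      exact mul_nonneg (sub_nonneg.2 h2) (sub_nonneg.2 h1)
    · have h1 := hG t ht s hs h
      have h2 := rpow_sym_cross' hba haA hab ht hs h
      exact mul_nonneg_of_nonpos_of_nonpos (sub_nonpos.2 h2) (sub_nonpos.2 h1)

/-! ### Monotonicity of the weights -/

/-- The slope `(cosh R - cosh h) / (R² - h²)` is nondecreasing in `|h|` (convexity of `u ↦ cosh √u`),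
by comparing power series termwise. -/
lemma cosh_slope {R h k : ℝ} (hhk : |h| ≤ |k|) (hkR : |k| ≤ R) :
    (cosh R - cosh h) * (R ^ 2 - k ^ 2) ≤ (cosh R - cosh k) * (R ^ 2 - h ^ 2) := by
  have H : ∀ x y : ℝ, HasSum (fun n : ℕ => (R ^ (2 * n) / (2 * n).factorial -
      x ^ (2 * n) / (2 * n).factorial) * y) ((cosh R - cosh x) * y) := fun x y =>
    ((hasSum_cosh R).sub (hasSum_cosh x)).mul_right y
  refine hasSum_le (fun n => ?_) (H h _) (H k _)
  have h1 : h ^ 2 ≤ k ^ 2 := sq_le_sq.2 hhk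
  have h2 : k ^ 2 ≤ R ^ 2 := sq_le_sq.2 (hkR.trans (le_abs_self R))
  simp only [pow_mul, ← sub_div, div_mul_eq_mul_div]
  gcongr ?_ / _
  -- convexity of `u ↦ u ^ n`, since `(X ^ n - x ^ n) / (X - x)` is a sum of monomials in `X, x`
  rw [← geom_sum₂_mul (R ^ 2) (h ^ 2) n, ← geom_sum₂_mul (R ^ 2) (k ^ 2) n,
    mul_right_comm (∑ i ∈ Finset.range n, (R ^ 2) ^ i * (h ^ 2) ^ (n - 1 - i))]
  have h0 : 0 ≤ h ^ 2 := sq_nonneg h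
  have : ∑ i ∈ Finset.range n, (R ^ 2) ^ i * (h ^ 2) ^ (n - 1 - i) ≤
      ∑ i ∈ Finset.range n, (R ^ 2) ^ i * (k ^ 2) ^ (n - 1 - i) := by
    gcongr
  exact mul_le_mul_of_nonneg_right (mul_le_mul_of_nonneg_right this (sub_nonneg.2 h2))
    (sub_nonneg.2 (h1.trans h2))

lemma one_sub_exp_mul (R h : ℝ) :
    (1 - exp (-(R - h))) * (1 - exp (-(R + h))) = 2 * exp (-R) * (cosh R - cosh h) := by
  have e1 : exp (-(R - h)) = exp (-R) * exp h := by rw [← exp_add]; ring_nf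
  have e2 : exp (-(R + h)) = exp (-R) * exp (-h) := by rw [← exp_add]; ring_nf
  have e3 : exp (-R) * exp R = 1 := by rw [← exp_add]; simp
  have e4 : exp (-h) * exp h = 1 := by rw [← exp_add]; simp
  rw [e1, e2, cosh_eq, cosh_eq]
  linear_combination (exp (-R))^2 * e4 - e3

lemma one_sub_exp_mul' (r s : ℝ) :
    (1 - exp (-s)) * (1 - exp (-(r - s))) =
      2 * exp (-(r / 2)) * (cosh (r / 2) - cosh ((s - (r - s)) / 2)) := by
  rw [← one_sub_exp_mul, mul_comm]
  congr 4 <;> ring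

lemma one_sub_exp_pos {s : ℝ} (hs : 0 < s) : 0 < 1 - exp (-s) := by
  have := Real.exp_lt_exp.2 (neg_lt_zero.2 hs); rw [Real.exp_zero] at this; linarith

lemma one_sub_exp_mul_anti {r s t : ℝ} (hst : |s - (r - s)| ≤ |t - (r - t)|) :
    (1 - exp (-t)) * (1 - exp (-(r - t))) ≤ (1 - exp (-s)) * (1 - exp (-(r - s))) := by
  rw [one_sub_exp_mul', one_sub_exp_mul']
  have : cosh ((s - (r - s)) / 2) ≤ cosh ((t - (r - t)) / 2) := by
    rw [cosh_le_cosh, abs_div, abs_div]; gcongr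
  gcongr

/-- `w(s) w(r - s)` with `w(s) = s / (1 - e^{-s})` decreases as `s` moves away from `r / 2`. -/
lemma weight_anti {r s t : ℝ} (hs : s ∈ Ioo 0 r) (ht : t ∈ Ioo 0 r)
    (hst : |s - (r - s)| ≤ |t - (r - t)|) :
    t / (1 - exp (-t)) * ((r - t) / (1 - exp (-(r - t)))) ≤
      s / (1 - exp (-s)) * ((r - s) / (1 - exp (-(r - s)))) := by
  have p1 := mul_pos (one_sub_exp_pos hs.1) (one_sub_exp_pos (sub_pos.2 hs.2))
  have p2 := mul_pos (one_sub_exp_pos ht.1) (one_sub_exp_pos (sub_pos.2 ht.2))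
  rw [div_mul_div_comm, div_mul_div_comm, div_le_div_iff₀ p2 p1, one_sub_exp_mul',
    one_sub_exp_mul']
  have := cosh_slope (R := r / 2) (h := (s - (r - s)) / 2) (k := (t - (r - t)) / 2)
    (by rw [abs_div, abs_div]; gcongr)
    (abs_le.2 ⟨by linarith [ht.1, ht.2], by linarith [ht.1, ht.2]⟩)
  have := mul_le_mul_of_nonneg_left this (by positivity : 0 ≤ 2 * exp (-(r / 2)))
  linarith

/-! ### Convolution densities -/

/-- The density of the Laplace transform defining `psiP p`. -/
noncomputable def kern (p t : ℝ) : ℝ := t ^ p / (1 - exp (-t))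

/-- The additive convolution `kern a * kern b` on `(0, ∞)`, which is the density of the Laplace
transform `psiP a * psiP b`. -/
noncomputable def conv (a b r : ℝ) : ℝ := ∫ s in Ioo 0 r, kern a s * kern b (r - s)

lemma weight_le {s : ℝ} (hs : 0 < s) : s / (1 - exp (-s)) ≤ 1 + s := by
  rw [div_le_iff₀ (one_sub_exp_pos hs), exp_neg]
  have h := add_one_le_exp s
  have : (exp s)⁻¹ * (1 + s) ≤ 1 := by
    rw [inv_mul_le_iff₀ (exp_pos s)]; linarith
  linarith

lemma weight_pos {s : ℝ} (hs : 0 < s) : 0 < s / (1 - exp (-s)) :=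
  div_pos hs (one_sub_exp_pos hs)

lemma kern_eq (p : ℝ) {t : ℝ} (ht : 0 < t) :
    kern p t = t ^ (p - 1) * (t / (1 - exp (-t))) := by
  rw [kern, rpow_sub_one ht.ne']; field_simp

lemma measurable_kern (p : ℝ) : Measurable (kern p) := by
  unfold kern; fun_prop

lemma kern_nonneg (p : ℝ) {t : ℝ} (ht : 0 < t) : 0 ≤ kern p t :=
  div_nonneg (rpow_nonneg ht.le _) (one_sub_exp_pos ht).le

lemma kern_laplace_integrable {p x : ℝ} (hp : 0 < p) (hx : 0 < x) :
    IntegrableOn (fun t => kern p t * exp (-x * t)) (Ioi 0) := by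
  have h1 := integrableOn_rpow_mul_exp_neg_mul_rpow (p := 1) (s := p - 1) (b := x)
    (by linarith) one_pos hx
  have h2 := integrableOn_rpow_mul_exp_neg_mul_rpow (p := 1) (s := p) (b := x)
    (by linarith) one_pos hx
  refine (h1.add h2).mono'
    (((measurable_kern p).mul (by fun_prop)).aestronglyMeasurable) ?_
  refine (ae_restrict_mem measurableSet_Ioi).mono fun t (ht : 0 < t) => ?_
  rw [norm_of_nonneg (mul_nonneg (kern_nonneg p ht) (exp_pos _).le), kern_eq p ht]
  simp only [Pi.add_apply, rpow_one]
  have h3 : t ^ p = t ^ (p - 1) * t := by rw [rpow_sub_one ht.ne']; field_simp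
  rw [h3, ← add_mul, ← mul_one_add]
  have := weight_le ht
  gcongr

lemma cm_psiP {p : ℝ} (hp : 0 < p) : CompletelyMonotonicOn (psiP p) :=
  cm_laplace (D := kern p) (fun _ ht => kern_nonneg p ht)
    (fun _ hx => kern_laplace_integrable hp hx) (fun _ _ => rfl)

lemma conv_integrable {a b r : ℝ} (ha : 0 < a) (hb : 0 < b) (hr : 0 < r) :
    IntegrableOn (fun s => kern a s * kern b (r - s)) (Ioo 0 r) := by
  refine ((beta_integrable ha hb hr).mul_const ((1 + r) * (1 + r))).mono'
    ((measurable_kern a).mul ((measurable_kern b).comp (by fun_prop))).aestronglyMeasurable ?_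
  refine (ae_restrict_mem measurableSet_Ioo).mono fun s hs => ?_
  have hs' : 0 < r - s := sub_pos.2 hs.2
  have hs0 : 0 < s := hs.1
  rw [norm_of_nonneg (mul_nonneg (kern_nonneg a hs0) (kern_nonneg b hs')), kern_eq a hs0,
    kern_eq b hs', mul_mul_mul_comm]
  have h1 : s / (1 - exp (-s)) ≤ 1 + r := (weight_le hs0).trans (by linarith [hs.2])
  have h2 : (r - s) / (1 - exp (-(r - s))) ≤ 1 + r := (weight_le hs').trans (by linarith)
  have h3 := (weight_pos hs').le
  gcongr

/-- The weight is `w(s) w(r - s)` with `w(s) = s / (1 - e^{-s})`. -/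
lemma conv_le_one {a b A B r : ℝ} (hr : 0 < r) (hB : 0 < B) (hBb : B ≤ b)
    (hba : b ≤ a) (haA : a ≤ A) (hab : a + b = A + B) :
    Real.Gamma a * Real.Gamma b * conv A B r ≤ Real.Gamma A * Real.Gamma B * conv a b r := by
  have hb : 0 < b := hB.trans_le hBb
  have ha : 0 < a := hb.trans_le hba
  have hA : 0 < A := ha.trans_le haA
  have e : ∀ c d : ℝ, EqOn (fun s => kern c s * kern d (r - s))
      (fun s => s ^ (c - 1) * (r - s) ^ (d - 1) *
        (s / (1 - exp (-s)) * ((r - s) / (1 - exp (-(r - s)))))) (Ioo 0 r) := by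
    intro c d s hs
    simp only
    rw [kern_eq c hs.1, kern_eq d (sub_pos.2 hs.2), mul_mul_mul_comm]
  rw [conv, conv, setIntegral_congr_fun measurableSet_Ioo (e A B),
    setIntegral_congr_fun measurableSet_Ioo (e a b)]
  refine beta_chebyshev
    (G := fun s => s / (1 - exp (-s)) * ((r - s) / (1 - exp (-(r - s)))))
    hr hB hBb hba haA hab (fun s => ?_) (fun s hs t ht h => weight_anti hs ht h)
    ((integrableOn_congr_fun (e a b) measurableSet_Ioo).1 (conv_integrable ha hb hr))
    ((integrableOn_congr_fun (e A B) measurableSet_Ioo).1 (conv_integrable hA hB hr))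
  simp only [sub_sub_cancel]
  rw [mul_comm]

/-- The weight is `v(s) v(r - s)` with `v(s) = 1 / (1 - e^{-s})`. It increases away from `r / 2`,
so `beta_chebyshev` applies to its negative and the inequality of `conv_le_one` is reversed. -/
lemma conv_le_two {a b A B r : ℝ} (hr : 0 < r) (hB : 0 < B) (hBb : B ≤ b)
    (hba : b ≤ a) (haA : a ≤ A) (hab : a + b = A + B) :
    Real.Gamma (A + 1) * Real.Gamma (B + 1) * conv a b r ≤
      Real.Gamma (a + 1) * Real.Gamma (b + 1) * conv A B r := by
  have hb : 0 < b := hB.trans_le hBb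
  have ha : 0 < a := hb.trans_le hba
  have hA : 0 < A := ha.trans_le haA
  have e : ∀ c d : ℝ, EqOn (fun s => -(kern c s * kern d (r - s)))
      (fun s => s ^ (c + 1 - 1) * (r - s) ^ (d + 1 - 1) *
        (-((1 - exp (-s)) * (1 - exp (-(r - s))))⁻¹)) (Ioo 0 r) := by
    intro c d s hs
    simp only [kern, add_sub_cancel_right]
    rw [div_mul_div_comm, div_eq_mul_inv, mul_neg]
  have i : ∀ c d : ℝ, conv c d r = -∫ s in Ioo 0 r, s ^ (c + 1 - 1) * (r - s) ^ (d + 1 - 1) *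
        (-((1 - exp (-s)) * (1 - exp (-(r - s))))⁻¹) := by
    intro c d
    rw [← setIntegral_congr_fun measurableSet_Ioo (e c d), integral_neg, neg_neg, conv]
  have := beta_chebyshev (G := fun s => -((1 - exp (-s)) * (1 - exp (-(r - s))))⁻¹)
    (a := a + 1) (b := b + 1) (A := A + 1) (B := B + 1)
    hr (by linarith) (by linarith) (by linarith) (by linarith) (by linarith) (fun s => ?_)
    (fun s hs t ht h => ?_)
    ((integrableOn_congr_fun (e a b) measurableSet_Ioo).1 (conv_integrable ha hb hr).neg)
    ((integrableOn_congr_fun (e A B) measurableSet_Ioo).1 (conv_integrable hA hB hr).neg)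
  · rw [i, i]; linarith
  · simp only [sub_sub_cancel]
    rw [mul_comm]
  · refine neg_le_neg (inv_anti₀ ?_ (one_sub_exp_mul_anti h))
    exact mul_pos (one_sub_exp_pos ht.1) (one_sub_exp_pos (sub_pos.2 ht.2))

lemma conv_laplace_integrand (a b x : ℝ) {r : ℝ} (hr : 0 < r) :
    ∫ s in (0 : ℝ)..r, ContinuousLinearMap.mul ℝ ℝ (kern a s * exp (-x * s))
      (kern b (r - s) * exp (-x * (r - s))) = conv a b r * exp (-x * r) := by
  rw [intervalIntegral.integral_of_le hr.le, integral_Ioc_eq_integral_Ioo, conv,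
    ← integral_mul_const]
  congr 1 with s
  have : exp (-x * r) = exp (-x * s) * exp (-x * (r - s)) := by rw [← exp_add]; ring_nf
  rw [this, ContinuousLinearMap.mul_apply']
  ring

lemma conv_laplace_integrable {a b x : ℝ} (ha : 0 < a) (hb : 0 < b) (hx : 0 < x) :
    IntegrableOn (fun r => conv a b r * exp (-x * r)) (Ioi 0) := by
  have h := (integrable_posConvolution (μ := volume) (ν := volume)
    (kern_laplace_integrable ha hx) (kern_laplace_integrable hb hx)
    (ContinuousLinearMap.mul ℝ ℝ)).integrableOn (s := Ioi 0)
  refine (integrableOn_congr_fun (fun r hr => ?_) measurableSet_Ioi).1 h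
  rw [posConvolution, indicator_of_mem hr]
  exact conv_laplace_integrand a b x hr

lemma psiP_mul {a b x : ℝ} (ha : 0 < a) (hb : 0 < b) (hx : 0 < x) :
    psiP a x * psiP b x = ∫ r in Ioi 0, conv a b r * exp (-x * r) := by
  have h := integral_posConvolution (μ := volume) (ν := volume)
    (kern_laplace_integrable ha hx) (kern_laplace_integrable hb hx)
    (ContinuousLinearMap.mul ℝ ℝ)
  rw [setIntegral_congr_fun measurableSet_Ioi
    (fun r hr => conv_laplace_integrand a b x hr)] at h
  rw [h]; rfl

/-! ### From two entries to majorized tuples -/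

lemma cm_pair {a b A B u v : ℝ} (ha : 0 < a) (hb : 0 < b) (hA : 0 < A) (hB : 0 < B)
    (h : ∀ r, 0 < r → v * conv A B r ≤ u * conv a b r) :
    CompletelyMonotonicOn (fun x => u * (psiP a x * psiP b x) - v * (psiP A x * psiP B x)) := by
  have e : ∀ x : ℝ, (fun r => (u * conv a b r - v * conv A B r) * exp (-x * r)) =
      fun r => u * (conv a b r * exp (-x * r)) - v * (conv A B r * exp (-x * r)) := by
    intro x; funext r; ring
  refine cm_laplace (D := fun r => u * conv a b r - v * conv A B r)
    (fun r hr => sub_nonneg.2 (h r hr)) (fun x hx => ?_) (fun x hx => ?_)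
  · rw [e]
    exact ((conv_laplace_integrable ha hb hx).const_mul u).sub
      ((conv_laplace_integrable hA hB hx).const_mul v)
  · rw [e, integral_sub ((conv_laplace_integrable ha hb hx).const_mul u)
      ((conv_laplace_integrable hA hB hx).const_mul v), integral_const_mul, integral_const_mul,
      psiP_mul ha hb hx, psiP_mul hA hB hx]

/-- Reduction to two entries. The sign `σ = ±1` covers both orders of the difference. -/
lemma cm_prod_sub {n : ℕ} (σ : ℝ) (φ : ℝ → ℝ → ℝ)
    (hφ : ∀ a, 0 < a → CompletelyMonotonicOn (φ a))
    (hpair : ∀ a b A B : ℝ, 0 < B → B ≤ b → b ≤ a → a ≤ A → a + b = A + B →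
      CompletelyMonotonicOn (fun x => σ * (φ a x * φ b x - φ A x * φ B x)))
    (p q : Fin n → ℝ) (hp : ∀ j, 0 < p j) (hq : ∀ j, 0 < q j) (hmaj : Majorizes p q) :
    CompletelyMonotonicOn (fun x => σ * (∏ j, φ (p j) x - ∏ j, φ (q j) x)) := by
  obtain ⟨hanti, -, hpart, hsum, -⟩ := hmaj
  refine transfer_induction (fun p q => CompletelyMonotonicOn
    (fun x => σ * (∏ j, φ (p j) x - ∏ j, φ (q j) x))) ?_ ?_ ?_ p hp hanti _ q hq le_rfl hpart hsum
  · intro p _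
    simpa using cm_const le_rfl
  · intro p q r h1 h2
    refine cm_congr (cm_add h1 h2) fun x _ => by ring
  · intro q j k δ hq hjk hδ hle
    set q' := Function.update (Function.update q j (q j - δ)) k (q k + δ) with hq'
    have hk : k ∈ Finset.univ.erase j := by simp [hjk.symm]
    have hsplit : ∀ (p : Fin n → ℝ) (x : ℝ), ∏ i, φ (p i) x =
        φ (p j) x * φ (p k) x * ∏ i ∈ (Finset.univ.erase j).erase k, φ (p i) x := by
      intro p x
      rw [mul_assoc, Finset.mul_prod_erase _ (fun i => φ (p i) x) hk,
        Finset.mul_prod_erase _ (fun i => φ (p i) x) (Finset.mem_univ j)]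
    have hrest : ∀ x : ℝ, ∏ i ∈ (Finset.univ.erase j).erase k, φ (q' i) x =
        ∏ i ∈ (Finset.univ.erase j).erase k, φ (q i) x := by
      intro x
      refine Finset.prod_congr rfl fun i hi => ?_
      simp only [Finset.mem_erase] at hi
      simp [hq', hi.1, hi.2.1]
    have hq'k : q' k = q k + δ := by simp [hq']
    have hq'j : q' j = q j - δ := by simp [hq', hjk]
    have h1 := hpair (q j - δ) (q k + δ) (q j) (q k) (hq k) (by linarith) hle (by linarith)
      (by ring)
    have h2 := cm_prod ((Finset.univ.erase j).erase k) (fun i => φ (q i)) fun i _ => hφ _ (hq i)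
    refine cm_congr (cm_mul h1 h2) fun x _ => ?_
    rw [hsplit q', hsplit q, hrest, hq'k, hq'j]
    ring

end CMPsi

open CMPsi in
theorem stmt3 (n : ℕ) (hn : 2 ≤ n) (p q : Fin n → ℝ)
    (hp : ∀ j, 0 < p j) (hq : ∀ j, 0 < q j) (hmaj : Majorizes p q) :
    CompletelyMonotonicOn (fun x =>
      ∏ j, psiP (p j) x -
        (∏ j, Real.Gamma (p j) / Real.Gamma (q j)) * ∏ j, psiP (q j) x) ∧
    CompletelyMonotonicOn (fun x =>
      (∏ j, Real.Gamma (p j + 1) / Real.Gamma (q j + 1)) * ∏ j, psiP (q j) x -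
        ∏ j, psiP (p j) x) := by
  have hΓ : ∀ a : ℝ, 0 < a → 0 < Real.Gamma a := fun a ha => Real.Gamma_pos_of_pos ha
  have hΓ1 : ∀ a : ℝ, 0 < a → 0 < Real.Gamma (a + 1) := fun a ha => hΓ _ (by linarith)
  constructor
  · have key := cm_prod_sub 1 (fun a x => (Real.Gamma a)⁻¹ * psiP a x)
      (fun a ha => cm_mul (cm_const (inv_nonneg.2 (hΓ a ha).le)) (cm_psiP ha)) ?_ p q hp hq hmaj
    · refine cm_congr (cm_mul (cm_const (c := ∏ j, Real.Gamma (p j))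
        (Finset.prod_nonneg fun j _ => (hΓ _ (hp j)).le)) key) fun x _ => ?_
      have h0 : ∏ j, Real.Gamma (p j) ≠ 0 := Finset.prod_ne_zero_iff.2 fun j _ => (hΓ _ (hp j)).ne'
      simp only [Finset.prod_mul_distrib, Finset.prod_inv_distrib, Finset.prod_div_distrib]
      field_simp
    · intro a b A B hB hBb hba haA hab
      have hb : 0 < b := hB.trans_le hBb
      have ha : 0 < a := hb.trans_le hba
      have hA : 0 < A := ha.trans_le haA
      have := hΓ a ha
      have := hΓ b hb
      have := hΓ A hA
      have := hΓ B hB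
      refine cm_congr (cm_pair (u := (Real.Gamma a * Real.Gamma b)⁻¹)
        (v := (Real.Gamma A * Real.Gamma B)⁻¹) ha hb hA hB fun r hr => ?_) fun x _ => ?_
      · rw [inv_mul_le_iff₀ (by positivity), mul_left_comm, le_inv_mul_iff₀ (by positivity)]
        exact conv_le_one hr hB hBb hba haA hab
      · field_simp
  · have key := cm_prod_sub (-1) (fun a x => (Real.Gamma (a + 1))⁻¹ * psiP a x)
      (fun a ha => cm_mul (cm_const (inv_nonneg.2 (hΓ1 a ha).le)) (cm_psiP ha)) ?_ p q hp hq hmaj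
    · refine cm_congr (cm_mul (cm_const (c := ∏ j, Real.Gamma (p j + 1))
        (Finset.prod_nonneg fun j _ => (hΓ1 _ (hp j)).le)) key) fun x _ => ?_
      have h0 : ∏ j, Real.Gamma (p j + 1) ≠ 0 :=
        Finset.prod_ne_zero_iff.2 fun j _ => (hΓ1 _ (hp j)).ne'
      simp only [Finset.prod_mul_distrib, Finset.prod_inv_distrib, Finset.prod_div_distrib]
      field_simp
      ring
    · intro a b A B hB hBb hba haA hab
      have hb : 0 < b := hB.trans_le hBb
      have ha : 0 < a := hb.trans_le hba
      have hA : 0 < A := ha.trans_le haA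
      have := hΓ1 a ha
      have := hΓ1 b hb
      have := hΓ1 A hA
      have := hΓ1 B hB
      refine cm_congr (cm_pair (u := (Real.Gamma (A + 1) * Real.Gamma (B + 1))⁻¹)
        (v := (Real.Gamma (a + 1) * Real.Gamma (b + 1))⁻¹) hA hB ha hb fun r hr => ?_)
        fun x _ => ?_
      · rw [inv_mul_le_iff₀ (by positivity), mul_left_comm, le_inv_mul_iff₀ (by positivity)]
        exact conv_le_two hr hB hBb hba haA hab
      · field_simp
        ring
end

section
/- Let n ≥ 2 and let the n-tuples p = (p₁,…,pₙ) and q = (q₁,…,qₙ) ∈ (0,∞)ⁿ satisfy p ≺ q. Then for all x > 0 the double inequality ∏_{j=1}^n Γ(p_j)/Γ(q_j) < ∏_{j=1}^n ψ_{p_j}(x)/ψ_{q_j}(x) < ∏_{j=1}^n Γ(p_j+1)/Γ(q_j+1) holds; moreover both bounds are sharp, in the sense that the ratio ∏_{j=1}^n ψ_{p_j}(x)/ψ_{q_j}(x) tends to ∏_{j=1}^n Γ(p_j+1)/Γ(q_j+1) as x → 0⁺ and to ∏_{j=1}^n Γ(p_j)/Γ(q_j) as x → ∞. -/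
/-!
Put `A(p) = ψ_p(x) / Γ(p)` and `B(p) = ψ_p(x) / Γ(p + 1)`. The left inequality says
`∏ A(q_j) < ∏ A(p_j)` and the right one `∏ B(p_j) < ∏ B(q_j)`. By the strict Karamata inequality
(`karamata`) they follow once `log A` is strictly concave and `log B` is strictly convex.

Both facts are instances of one statement (`strictConcaveOn_normMoment`, a form of a theorem of
Borell): if `h` is strictly log-concave (log-convex) on `(0, ∞)`, then so is
`p ↦ Γ(p)⁻¹ ∫ t ^ (p - 1) h(t) dt`. Here `h(t) = t e^{-xt} / (1 - e^{-t})` gives `A(p)`, and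
`h(t) = e^{-xt} / (1 - e^{-t})` gives `B(p - 1)`. To prove it, compare `h` with an exponential
`E(t) = A e^{-rt}` having the same normalized moments at two orders; those of `E` are log-affine
in the order. The set where `h - E` (or `E - h`, in the log-convex case) is positive is an
interval. For an intermediate order `c`, a combination of `t ^ a`, `t ^ c`, `t ^ b` can be chosen
with the same sign as this difference (`exists_weight`), and integrating the product shows that
the moment of order `c` is positive (`moment_pos`).

For the limits, `max (1, 1/t) ≤ 1 / (1 - e^{-t}) ≤ 1 + 1/t` gives `x ^ (p + 1) ψ_p(x) → Γ(p + 1)`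
at `0` and `x ^ p ψ_p(x) → Γ(p)` at infinity (`psiP_bounds`); the powers of `x` cancel in the
product because both tuples have the same sum.
-/


open Real MeasureTheory Set Filter

/-! ### Karamata's inequality -/

/-- Summation by parts in inequality form. The bound by `m (Fin.last n) * ∑ d` rather than `0`
is what makes the induction on `n` go through. -/
lemma abel_le (n : ℕ) (m d : Fin (n + 1) → ℝ) (hm : Monotone m)
    (hd : ∀ k, 0 ≤ ∑ j ∈ Finset.univ.filter (fun j => j ≤ k), d j) :
    ∑ j, m j * d j ≤ m (Fin.last n) * ∑ j, d j := by
  induction n with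
  | zero => simp
  | succ n ih =>
    have key : ∀ k : Fin (n + 1), ∑ j ∈ Finset.univ.filter (fun j => j ≤ k), d j.castSucc
        = ∑ j ∈ Finset.univ.filter (fun j => j ≤ k.castSucc), d j := by
      intro k
      rw [Finset.sum_filter, Finset.sum_filter, Fin.sum_univ_castSucc (n := n + 1)]
      simp
    have h1 := ih (fun j => m j.castSucc) (fun j => d j.castSucc)
      (fun i j hij => hm (Fin.castSucc_le_castSucc_iff.2 hij))
      (fun k => by rw [key]; exact hd _)
    have h2 : 0 ≤ ∑ j : Fin (n + 1), d j.castSucc := by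
      have h := hd (Fin.last n).castSucc
      rw [← key, Finset.filter_true_of_mem (fun j _ => Fin.le_last j)] at h
      exact h
    have h3 : m (Fin.last n).castSucc ≤ m (Fin.last (n + 1)) := hm (Fin.le_last _)
    rw [Fin.sum_univ_castSucc, Fin.sum_univ_castSucc (f := d), mul_add]
    have := mul_le_mul_of_nonneg_right h3 h2
    linarith

/-- On an open half-line, the right derivative of a strictly convex function is the slope of a
supporting line touching the graph only at the base point. -/
lemma strict_support {f : ℝ → ℝ} {a : ℝ} (hf : StrictConvexOn ℝ (Ioi a) f) {x y : ℝ}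
    (hx : a < x) (hy : a < y) (hxy : y ≠ x) :
    f x + derivWithin f (Ioi x) x * (y - x) < f y := by
  have weak : ∀ z, a < z → f x + derivWithin f (Ioi x) x * (z - x) ≤ f z := by
    intro z hz
    have hxi : x ∈ interior (Ioi a) := by rwa [interior_Ioi]
    rcases lt_trichotomy z x with h | h | h
    · have h1 := (hf.convexOn.slope_le_leftDeriv_of_mem_interior hz hxi h).trans
        (hf.convexOn.leftDeriv_le_rightDeriv_of_mem_interior hxi)
      rw [slope_def_field, div_le_iff₀ (by linarith)] at h1
      linarith
    · simp [h]
    · have h1 := hf.convexOn.rightDeriv_le_slope_of_mem_interior hxi hz h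
      rw [slope_def_field, le_div_iff₀ (by linarith)] at h1
      linarith
  -- Strictness: the weak inequality at the midpoint, combined with strict convexity.
  have h1 := weak ((1 / 2) * x + (1 / 2) * y) (by linarith)
  have h2 := hf.2 (mem_Ioi.2 hx) (mem_Ioi.2 hy) hxy.symm (by norm_num : (0 : ℝ) < 1 / 2)
    (by norm_num : (0 : ℝ) < 1 / 2) (by norm_num)
  simp only [smul_eq_mul] at h2
  nlinarith

/-- Karamata's inequality, strict form. -/
lemma karamata {n : ℕ} {p q : Fin n → ℝ} (hmaj : Majorizes p q) {f : ℝ → ℝ} {a : ℝ}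
    (hf : StrictConvexOn ℝ (Ioi a) f) (hp : ∀ j, a < p j) (hq : ∀ j, a < q j) :
    ∑ j, f (p j) < ∑ j, f (q j) := by
  obtain ⟨hpm, -, hpart, hsum, hne⟩ := hmaj
  obtain ⟨j₀, hj₀⟩ := Function.ne_iff.1 hne
  cases n with
  | zero => exact j₀.elim0
  | succ n =>
    -- Slopes of supporting lines at the points `p j`, which decrease with `j`.
    set m : Fin (n + 1) → ℝ := fun j => derivWithin f (Ioi (p j)) (p j) with hm
    have hmono : Monotone (fun j => - m j) := by
      intro i j hij
      have := hf.convexOn.monotoneOn_rightDeriv (a := p j) (b := p i)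
        (by rw [interior_Ioi]; exact hp j) (by rw [interior_Ioi]; exact hp i) (hpm i j hij)
      simpa [hm] using this
    have h1 := abel_le n (fun j => - m j) (fun j => q j - p j) hmono (fun k => by
      rw [Finset.sum_sub_distrib]; linarith [hpart k])
    rw [Finset.sum_sub_distrib, hsum, sub_self, mul_zero] at h1
    have h2 : ∑ j, (f (p j) + m j * (q j - p j)) < ∑ j, f (q j) := by
      refine Finset.sum_lt_sum (fun j _ => ?_) ⟨j₀, Finset.mem_univ _, ?_⟩
      · by_cases h : q j = p j
        · simp [h]
        · exact (strict_support hf (hp j) (hq j) h).le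
      · exact strict_support hf (hp j₀) (hq j₀) (Ne.symm hj₀)
    rw [Finset.sum_add_distrib] at h2
    simp only [neg_mul, Finset.sum_neg_distrib] at h1
    linarith

/-! ### Moments of functions with two sign changes -/

/-- Three-point form of strict concavity, free of division. -/
lemma chord {f : ℝ → ℝ} {s : Set ℝ} (hf : StrictConcaveOn ℝ s f) {x y z : ℝ} (hx : x ∈ s)
    (hz : z ∈ s) (hxy : x < y) (hyz : y < z) :
    (z - y) * f x + (y - x) * f z < (z - x) * f y := by
  have hxz : 0 < z - x := by linarith
  have h := hf.2 hx hz (by linarith : x ≠ z) (div_pos (sub_pos.2 hyz) hxz)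
    (div_pos (sub_pos.2 hxy) hxz) (by field_simp; ring)
  have e : ((z - y) / (z - x)) • x + ((y - x) / (z - x)) • z = y := by
    simp only [smul_eq_mul]; field_simp; ring
  rw [e] at h
  simp only [smul_eq_mul] at h
  have h2 := mul_lt_mul_of_pos_left h hxz
  have e2 : (z - x) * ((z - y) / (z - x) * f x + (y - x) / (z - x) * f z)
      = (z - y) * f x + (y - x) * f z := by field_simp
  rwa [e2] at h2

/-- A combination of `t ^ a` and `t ^ b` changing sign exactly at a prescribed point. -/
lemma two_powers {a b t₁ : ℝ} (hab : a < b) (h₁ : 0 < t₁) :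
    ∃ α : ℝ, ∀ t, 0 < t → (t < t₁ → α * t ^ a + t ^ b < 0) ∧ (t₁ < t → 0 < α * t ^ a + t ^ b) := by
  refine ⟨-t₁ ^ (b - a), fun t ht => ?_⟩
  have hta : 0 < t ^ a := rpow_pos_of_pos ht a
  have e : -t₁ ^ (b - a) * t ^ a + t ^ b = t ^ a * (t ^ (b - a) - t₁ ^ (b - a)) := by
    rw [show t ^ b = t ^ a * t ^ (b - a) by rw [← rpow_add ht]; ring_nf]; ring
  rw [e]
  refine ⟨fun h => mul_neg_of_pos_of_neg hta (sub_neg.2 ?_), fun h => mul_pos hta (sub_pos.2 ?_)⟩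
  · exact rpow_lt_rpow ht.le h (by linarith)
  · exact rpow_lt_rpow h₁.le h (by linarith)

/-- For `a < c < b`, some `t ^ c + α t ^ a + β t ^ b` is positive exactly between two prescribed
points and negative outside: in the variable `u = t ^ (b - a)`, and after division by `t ^ a`,
it is the strictly concave function `u ^ ((c - a) / (b - a))` minus its chord. -/
lemma three_powers {a b c t₁ t₂ : ℝ} (hac : a < c) (hcb : c < b) (h₁ : 0 < t₁) (h₂ : t₁ < t₂) :
    ∃ α β : ℝ, ∀ t, 0 < t → (t < t₁ → t ^ c + α * t ^ a + β * t ^ b < 0) ∧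
      (t₁ < t → t < t₂ → 0 < t ^ c + α * t ^ a + β * t ^ b) ∧
      (t₂ < t → t ^ c + α * t ^ a + β * t ^ b < 0) := by
  have hba : 0 < b - a := by linarith
  set θ := (c - a) / (b - a) with hθ
  have hθ0 : 0 < θ := div_pos (by linarith) hba
  have hθ1 : θ < 1 := by rw [hθ, div_lt_one hba]; linarith
  have hconc := Real.strictConcaveOn_rpow hθ0 hθ1
  set u₁ := t₁ ^ (b - a) with hu₁
  set u₂ := t₂ ^ (b - a) with hu₂
  have hu₁0 : 0 < u₁ := rpow_pos_of_pos h₁ _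
  have hu₁₂ : u₁ < u₂ := rpow_lt_rpow h₁.le h₂ hba
  set β := (u₂ ^ θ - u₁ ^ θ) / (u₂ - u₁) with hβ
  have hβe : β * (u₂ - u₁) = u₂ ^ θ - u₁ ^ θ := div_mul_cancel₀ _ (by linarith)
  refine ⟨-(u₁ ^ θ - β * u₁), -β, fun t ht => ?_⟩
  have hta : 0 < t ^ a := rpow_pos_of_pos ht a
  set u := t ^ (b - a) with hu
  have hu0 : 0 < u := rpow_pos_of_pos ht _
  have e : t ^ c + -(u₁ ^ θ - β * u₁) * t ^ a + -β * t ^ b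
      = t ^ a * (u ^ θ - (u₁ ^ θ - β * u₁) - β * u) := by
    have e1 : t ^ b = t ^ a * u := by rw [hu, ← rpow_add ht]; ring_nf
    have e2 : t ^ c = t ^ a * u ^ θ := by
      rw [hu, ← rpow_mul ht.le, ← rpow_add ht, hθ]; congr 1; field_simp; ring
    rw [e1, e2]; ring
  rw [e]
  refine ⟨fun h => mul_neg_of_pos_of_neg hta ?_, fun h h' => mul_pos hta ?_,
    fun h => mul_neg_of_pos_of_neg hta ?_⟩
  · have huu : u < u₁ := rpow_lt_rpow ht.le h hba
    have h3 := chord hconc hu0.le (hu₁0.trans hu₁₂).le huu hu₁₂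
    have h4 : (u₂ - u₁) * (u ^ θ - (u₁ ^ θ - β * u₁) - β * u) < 0 := by
      linear_combination h3 + (u₁ - u) * hβe
    exact (pos_iff_neg_of_mul_neg h4).1 (by linarith)
  · have huu : u₁ < u := rpow_lt_rpow h₁.le h hba
    have huu' : u < u₂ := rpow_lt_rpow ht.le h' hba
    have h3 := chord hconc hu₁0.le (hu₁0.trans hu₁₂).le huu huu'
    have h4 : 0 < (u₂ - u₁) * (u ^ θ - (u₁ ^ θ - β * u₁) - β * u) := by
      linear_combination h3 - (u₁ - u) * hβe
    exact (pos_iff_pos_of_mul_pos h4).1 (by linarith)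
  · have huu : u₂ < u := rpow_lt_rpow (h₁.trans h₂).le h hba
    have h3 := chord hconc hu₁0.le hu0.le hu₁₂ huu
    have h4 : (u₂ - u₁) * (u ^ θ - (u₁ ^ θ - β * u₁) - β * u) < 0 := by
      linear_combination h3 + (u₁ - u) * hβe
    exact (pos_iff_neg_of_mul_neg h4).1 (by linarith)

/-- Weight matching the sign pattern of `G`. The set where `G` is positive is an interval, so a
generalized polynomial in `t ^ a, t ^ c, t ^ b` can be chosen with the same sign as `G` off the
two endpoints `z₁, z₂`. The coefficient of `t ^ c` is nonnegative, and it vanishes when the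
interval is degenerate or reaches `0` or `∞`. -/
lemma exists_weight {a b c : ℝ} (hac : a < c) (hcb : c < b) {G : ℝ → ℝ}
    (hG : ∀ s t u, 0 < s → s < t → t < u → 0 ≤ G s → 0 ≤ G u → 0 < G t) :
    ∃ γ α β z₁ z₂ : ℝ, 0 ≤ γ ∧ ∀ t, 0 < t → t ≠ z₁ → t ≠ z₂ →
      γ * t ^ c + α * t ^ a + β * t ^ b ≠ 0 ∧ 0 ≤ (γ * t ^ c + α * t ^ a + β * t ^ b) * G t := by
  have hab : a < b := hac.trans hcb
  set S : Set ℝ := {t | 0 < t ∧ 0 < G t} with hS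
  have hconn : ∀ s t u, s ∈ S → u ∈ S → s < t → t < u → 0 < G t := fun s t u hs hu h1 h2 =>
    hG s t u hs.1 h1 h2 hs.2.le hu.2.le
  have hbelow : BddBelow S := ⟨0, fun t ht => ht.1.le⟩
  have hneg : ∀ t, 0 < t → t ∉ S → G t ≤ 0 := fun t ht h => not_lt.1 fun h' => h ⟨ht, h'⟩
  rcases S.eq_empty_or_nonempty with hemp | hne
  · refine ⟨0, -1, 0, 0, 0, le_rfl, fun t ht _ _ => ?_⟩
    have h1 := hneg t ht (by simp [hemp])
    have h2 : 0 < t ^ a := rpow_pos_of_pos ht a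
    exact ⟨by linarith, by nlinarith⟩
  have hlt : ∀ t, sInf S < t → ∃ s ∈ S, s < t := fun t ht => exists_lt_of_csInf_lt hne ht
  have hnot1 : ∀ t, 0 < t → t < sInf S → G t ≤ 0 := fun t ht h =>
    hneg t ht fun hm => absurd (csInf_le hbelow hm) (not_le.2 h)
  have hinf0 : 0 ≤ sInf S := le_csInf hne fun t ht => ht.1.le
  by_cases habove : BddAbove S
  · have hgt : ∀ t, t < sSup S → ∃ s ∈ S, t < s := fun t ht => exists_lt_of_lt_csSup hne ht
    have hnot2 : ∀ t, 0 < t → sSup S < t → G t ≤ 0 := fun t ht h =>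
      hneg t ht fun hm => absurd (le_csSup habove hm) (not_le.2 h)
    have hmid : ∀ t, sInf S < t → t < sSup S → 0 < G t := fun t h1 h2 => by
      obtain ⟨s, hs, hst⟩ := hlt t h1
      obtain ⟨u, hu, htu⟩ := hgt t h2
      exact hconn s t u hs hu hst htu
    have hle : sInf S ≤ sSup S := csInf_le_csSup hne hbelow habove
    rcases hinf0.eq_or_lt with h0 | h0
    · -- The interval reaches `0` and has a finite right endpoint.
      have hsup : 0 < sSup S := by
        obtain ⟨s, hs⟩ := hne
        exact hs.1.trans_le (le_csSup habove hs)
      obtain ⟨α, hα⟩ := two_powers hab hsup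
      refine ⟨0, -α, -1, sSup S, sSup S, le_rfl, fun t ht h1 _ => ?_⟩
      rcases lt_or_gt_of_ne h1 with h | h
      · have h3 := (hα t ht).1 h
        have h4 := hmid t (by rwa [← h0]) h
        exact ⟨by linarith, by nlinarith⟩
      · have h3 := (hα t ht).2 h
        have h4 := hnot2 t ht h
        exact ⟨by linarith, by nlinarith⟩
    · rcases hle.eq_or_lt with h12 | h12
      · -- The interval is a single point.
        refine ⟨0, -1, 0, sInf S, sInf S, le_rfl, fun t ht h1 _ => ?_⟩
        have h2 : 0 < t ^ a := rpow_pos_of_pos ht a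
        have h3 : G t ≤ 0 := by
          rcases lt_or_gt_of_ne h1 with h | h
          · exact hnot1 t ht h
          · exact hnot2 t ht (h12 ▸ h)
        exact ⟨by linarith, by nlinarith⟩
      · obtain ⟨α, β, hw⟩ := three_powers hac hcb h0 h12
        refine ⟨1, α, β, sInf S, sSup S, zero_le_one, fun t ht h1 h2 => ?_⟩
        rw [one_mul]
        rcases lt_or_gt_of_ne h1 with h | h
        · have h3 := (hw t ht).1 h
          exact ⟨h3.ne, mul_nonneg_of_nonpos_of_nonpos h3.le (hnot1 t ht h)⟩
        · rcases lt_or_gt_of_ne h2 with h' | h'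
          · have h3 := (hw t ht).2.1 h h'
            exact ⟨h3.ne', mul_nonneg h3.le (hmid t h h').le⟩
          · have h3 := (hw t ht).2.2 h'
            exact ⟨h3.ne, mul_nonneg_of_nonpos_of_nonpos h3.le (hnot2 t ht h')⟩
  · have hgt : ∀ t, ∃ s ∈ S, t < s := fun t => not_bddAbove_iff.1 habove t
    have hmid : ∀ t, sInf S < t → 0 < G t := fun t h1 => by
      obtain ⟨s, hs, hst⟩ := hlt t h1
      obtain ⟨u, hu, htu⟩ := hgt t
      exact hconn s t u hs hu hst htu
    rcases hinf0.eq_or_lt with h0 | h0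
    · -- `G` is positive on the whole half-line.
      refine ⟨0, 1, 0, 0, 0, le_rfl, fun t ht _ _ => ?_⟩
      have h1 := hmid t (by rwa [← h0])
      have h2 : 0 < t ^ a := rpow_pos_of_pos ht a
      exact ⟨by linarith, by nlinarith⟩
    · obtain ⟨α, hα⟩ := two_powers hab h0
      refine ⟨0, α, 1, sInf S, sInf S, le_rfl, fun t ht h1 _ => ?_⟩
      rcases lt_or_gt_of_ne h1 with h | h
      · have h3 := (hα t ht).1 h
        have h4 := hnot1 t ht h
        exact ⟨by linarith, by nlinarith⟩
      · have h3 := (hα t ht).2 h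
        have h4 := hmid t h
        exact ⟨by linarith, by nlinarith⟩

/-- A property holding almost everywhere on the half-line holds somewhere in each interval. -/
lemma exists_of_ae {P : ℝ → Prop} (h : ∀ᵐ t ∂(volume.restrict (Ioi (0 : ℝ))), P t) {u v : ℝ}
    (hu : 0 ≤ u) (huv : u < v) : ∃ t, u < t ∧ t < v ∧ P t := by
  have h1 : ∀ᵐ t ∂(volume.restrict (Ioo u v)), P t :=
    ae_restrict_of_ae_restrict_of_subset (fun t ht => lt_of_le_of_lt hu ht.1) h
  have : (ae (volume.restrict (Ioo u v))).NeBot := by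
    rw [ae_neBot, Ne, Measure.restrict_eq_zero, Real.volume_Ioo]
    simpa using huv
  obtain ⟨t, h2, h3⟩ := (h1.and (ae_restrict_mem measurableSet_Ioo)).exists
  exact ⟨t, h3.1, h3.2, h2⟩

/-- If `G` is positive strictly between any two points where it is nonnegative, and its moments
of orders `a` and `b` vanish, then its moments of intermediate order are positive. -/
lemma moment_pos {a b c : ℝ} (hac : a < c) (hcb : c < b) {G : ℝ → ℝ}
    (hG : ∀ s t u, 0 < s → s < t → t < u → 0 ≤ G s → 0 ≤ G u → 0 < G t)
    (ia : IntegrableOn (fun t => t ^ a * G t) (Ioi 0))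
    (ib : IntegrableOn (fun t => t ^ b * G t) (Ioi 0))
    (ic : IntegrableOn (fun t => t ^ c * G t) (Ioi 0))
    (ha : ∫ t in Ioi (0 : ℝ), t ^ a * G t = 0) (hb : ∫ t in Ioi (0 : ℝ), t ^ b * G t = 0) :
    0 < ∫ t in Ioi (0 : ℝ), t ^ c * G t := by
  obtain ⟨γ, α, β, z₁, z₂, hγ, hw⟩ := exists_weight hac hcb hG
  by_contra hcon
  rw [not_lt] at hcon
  have e : (fun t => (γ * t ^ c + α * t ^ a + β * t ^ b) * G t)
      = fun t => γ * (t ^ c * G t) + α * (t ^ a * G t) + β * (t ^ b * G t) := by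
    funext t; ring
  have hz : ∀ z : ℝ, ∀ᵐ t ∂(volume.restrict (Ioi (0 : ℝ))), t ≠ z := fun z =>
    ae_restrict_of_ae (Measure.ae_ne volume z)
  have hInt : IntegrableOn (fun t => (γ * t ^ c + α * t ^ a + β * t ^ b) * G t) (Ioi 0) := by
    rw [e]; exact ((ic.const_mul γ).add (ia.const_mul α)).add (ib.const_mul β)
  have hval : ∫ t in Ioi (0 : ℝ), (γ * t ^ c + α * t ^ a + β * t ^ b) * G t
      = γ * ∫ t in Ioi (0 : ℝ), t ^ c * G t := by
    have ica : IntegrableOn (fun t => γ * (t ^ c * G t) + α * (t ^ a * G t)) (Ioi 0) :=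
      (ic.const_mul γ).add (ia.const_mul α)
    rw [e, integral_add ica (ib.const_mul β),
      integral_add (ic.const_mul γ) (ia.const_mul α)]
    simp only [integral_const_mul, ha, hb, mul_zero, add_zero]
  have hnn : 0 ≤ᵐ[volume.restrict (Ioi (0 : ℝ))]
      fun t => (γ * t ^ c + α * t ^ a + β * t ^ b) * G t := by
    filter_upwards [hz z₁, hz z₂, ae_restrict_mem measurableSet_Ioi] with t h1 h2 ht
    exact (hw t ht h1 h2).2
  have h0 : ∫ t in Ioi (0 : ℝ), (γ * t ^ c + α * t ^ a + β * t ^ b) * G t = 0 :=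
    le_antisymm (hval ▸ mul_nonpos_of_nonneg_of_nonpos hγ hcon) (integral_nonneg_of_ae hnn)
  have hae : ∀ᵐ t ∂(volume.restrict (Ioi (0 : ℝ))), G t = 0 := by
    filter_upwards [(integral_eq_zero_iff_of_nonneg_ae hnn hInt).1 h0, hz z₁, hz z₂,
      ae_restrict_mem measurableSet_Ioi] with t h h1 h2 ht
    exact (mul_eq_zero.1 h).resolve_left (hw t ht h1 h2).1
  -- Three zeros of `G` contradict the hypothesis `hG`.
  obtain ⟨r, hr, hr', hGr⟩ := exists_of_ae hae (zero_le_one) (one_lt_two)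
  obtain ⟨s, hs, hs', hGs⟩ := exists_of_ae hae (zero_le_two) (by norm_num : (2 : ℝ) < 3)
  obtain ⟨t, ht, ht', hGt⟩ := exists_of_ae hae (by norm_num : (0 : ℝ) ≤ 3)
    (by norm_num : (3 : ℝ) < 4)
  have := hG r s t (by linarith) (by linarith) (by linarith) hGr.ge hGt.ge
  linarith

/-! ### Normalized moments of log-concave and log-convex functions -/

/-- The moment of order `p - 1` of `h` on the half-line, divided by `Γ(p)`. The exponential
`t ↦ A * exp (-(r * t))` is sent to `p ↦ A * r ^ (-p)`. -/
noncomputable def normMoment (h : ℝ → ℝ) (p : ℝ) : ℝ :=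
  (∫ t in Ioi (0 : ℝ), t ^ (p - 1) * h t) / Real.Gamma p

lemma moment_pos_of_pos {h : ℝ → ℝ} {p : ℝ} (hpos : ∀ t, 0 < t → 0 < h t)
    (hInt : IntegrableOn (fun t => t ^ (p - 1) * h t) (Ioi 0)) :
    0 < ∫ t in Ioi (0 : ℝ), t ^ (p - 1) * h t := by
  have hp : ∀ t, 0 < t → 0 < t ^ (p - 1) * h t := fun t ht =>
    mul_pos (rpow_pos_of_pos ht _) (hpos t ht)
  have hnn : 0 ≤ᵐ[volume.restrict (Ioi (0 : ℝ))] fun t => t ^ (p - 1) * h t := by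
    filter_upwards [ae_restrict_mem measurableSet_Ioi] with t ht
    exact (hp t ht).le
  refine (integral_nonneg_of_ae hnn).lt_of_ne fun h0 => ?_
  obtain ⟨t, ht, -, h1⟩ := exists_of_ae
    ((integral_eq_zero_iff_of_nonneg_ae hnn hInt).1 h0.symm) zero_le_one one_lt_two
  exact (hp t (by linarith)).ne' h1

lemma normMoment_pos {h : ℝ → ℝ} {p : ℝ} (hp : 0 < p) (hpos : ∀ t, 0 < t → 0 < h t)
    (hInt : IntegrableOn (fun t => t ^ (p - 1) * h t) (Ioi 0)) : 0 < normMoment h p :=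
  div_pos (moment_pos_of_pos hpos hInt) (Real.Gamma_pos_of_pos hp)

lemma sign_log {σ u v : ℝ} (hσ : σ = 1 ∨ σ = -1) (hu : 0 < u) (hv : 0 < v) :
    (0 ≤ σ * (u - v) ↔ 0 ≤ σ * (log u - log v)) ∧ (0 < σ * (u - v) ↔ 0 < σ * (log u - log v)) := by
  have h1 := Real.log_le_log_iff hu hv
  have h2 := Real.log_le_log_iff hv hu
  have h3 := Real.log_lt_log_iff hu hv
  have h4 := Real.log_lt_log_iff hv hu
  rcases hσ with rfl | rfl
  · constructor
    · rw [one_mul, one_mul, sub_nonneg, sub_nonneg, h2]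
    · rw [one_mul, one_mul, sub_pos, sub_pos, h4]
  · constructor
    · rw [neg_one_mul, neg_one_mul, neg_sub, neg_sub, sub_nonneg, sub_nonneg, h1]
    · rw [neg_one_mul, neg_one_mul, neg_sub, neg_sub, sub_pos, sub_pos, h3]

lemma integrableOn_rpow_mul_exp {p r : ℝ} (hp : 0 < p) (hr : 0 < r) :
    IntegrableOn (fun t : ℝ => t ^ (p - 1) * exp (-(r * t))) (Ioi 0) := by
  have h := integrableOn_rpow_mul_exp_neg_mul_rpow (s := p - 1) (p := 1) (b := r)
    (by linarith) one_pos hr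
  simpa [rpow_one, neg_mul] using h

/-- If `h` is strictly log-concave (`σ = 1`) or strictly log-convex (`σ = -1`), so is its
normalized moment as a function of the order. For three orders `x < c < y`, compare `h` with the
exponential having the same normalized moments at `x` and `y`: these are log-affine in the order,
and `h` minus the exponential has the sign pattern required by `moment_pos`. -/
lemma strictConcaveOn_normMoment {h : ℝ → ℝ} {p₀ σ : ℝ} (hp₀ : 0 ≤ p₀) (hσ : σ = 1 ∨ σ = -1)
    (hpos : ∀ t, 0 < t → 0 < h t)
    (hInt : ∀ p, p₀ < p → IntegrableOn (fun t => t ^ (p - 1) * h t) (Ioi 0))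
    (hc : StrictConcaveOn ℝ (Ioi 0) fun t => σ * log (h t)) :
    StrictConcaveOn ℝ (Ioi p₀) fun p => σ * log (normMoment h p) := by
  refine LinearOrder.strictConcaveOn_of_lt (convex_Ioi _) ?_
  intro x hx y hy hxy m n hm hn hmn
  simp only [smul_eq_mul]
  rw [mem_Ioi] at hx hy
  set c := m * x + n * y with hcdef
  obtain rfl : m = 1 - n := by linarith
  have hxc : x < c := by rw [hcdef]; nlinarith
  have hcy : c < y := by rw [hcdef]; nlinarith
  -- Logarithm of the rate of the comparison exponential, and its normalized moments.
  set ℓ := (log (normMoment h x) - log (normMoment h y)) / (y - x) with hℓ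
  have hℓe : ℓ * (y - x) = log (normMoment h x) - log (normMoment h y) :=
    div_mul_cancel₀ _ (by linarith)
  set r := exp ℓ with hr
  have hr0 : 0 < r := exp_pos _
  set κ := log (normMoment h x) + ℓ * x with hκ
  have eint : ∀ p, p₀ < p → IntegrableOn (fun t => t ^ (p - 1) * exp (κ - r * t)) (Ioi 0) := by
    intro p hp
    refine ((integrableOn_rpow_mul_exp (p := p) (by linarith) hr0).const_mul (exp κ)).congr
      (.of_forall fun t => ?_)
    simp only [sub_eq_add_neg κ, exp_add]; ring
  have e_val : ∀ p, p₀ < p → ∫ t in Ioi (0 : ℝ), t ^ (p - 1) * exp (κ - r * t)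
      = exp (κ - ℓ * p) * Real.Gamma p := by
    intro p hp
    have e1 : (fun t : ℝ => t ^ (p - 1) * exp (κ - r * t))
        = fun t => exp κ * (t ^ (p - 1) * exp (-(r * t))) := by
      funext t; simp only [sub_eq_add_neg κ, exp_add]; ring
    rw [e1, integral_const_mul, integral_rpow_mul_exp_neg_mul_Ioi (by linarith) hr0,
      hr, one_div, ← exp_neg, ← exp_mul, ← mul_assoc, ← exp_add]
    ring_nf
  have hgam : ∀ p, p₀ < p → 0 < Real.Gamma p := fun p hp => Real.Gamma_pos_of_pos (by linarith)
  have hnm : ∀ p, p₀ < p → 0 < normMoment h p := fun p hp =>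
    normMoment_pos (by linarith) hpos (hInt p hp)
  have hm_eq : ∀ p, p₀ < p → ∫ t in Ioi (0 : ℝ), t ^ (p - 1) * h t
      = normMoment h p * Real.Gamma p := fun p hp => (div_mul_cancel₀ _ (hgam p hp).ne').symm
  have Gfun : ∀ p : ℝ, (fun t => t ^ (p - 1) * (σ * (h t - exp (κ - r * t))))
      = fun t => σ * (t ^ (p - 1) * h t - t ^ (p - 1) * exp (κ - r * t)) := by
    intro p; funext t; ring
  have Gint : ∀ p, p₀ < p →
      IntegrableOn (fun t => t ^ (p - 1) * (σ * (h t - exp (κ - r * t)))) (Ioi 0) := by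
    intro p hp
    rw [Gfun]; exact ((hInt p hp).sub (eint p hp)).const_mul σ
  have Gval : ∀ p, p₀ < p → ∫ t in Ioi (0 : ℝ), t ^ (p - 1) * (σ * (h t - exp (κ - r * t)))
      = σ * (normMoment h p - exp (κ - ℓ * p)) * Real.Gamma p := by
    intro p hp
    rw [Gfun, integral_const_mul, integral_sub (hInt p hp) (eint p hp), e_val p hp, hm_eq p hp]
    ring
  have key := moment_pos (a := x - 1) (b := y - 1) (c := c - 1)
    (G := fun t => σ * (h t - exp (κ - r * t))) (by linarith) (by linarith)
    (by
      intro s t u hs hst htu h1 h2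
      have ht := hs.trans hst
      have hu := ht.trans htu
      have h1' := (sign_log hσ (hpos s hs) (exp_pos _)).1.1 h1
      have h2' := (sign_log hσ (hpos u hu) (exp_pos _)).1.1 h2
      refine (sign_log hσ (hpos t ht) (exp_pos _)).2.2 ?_
      rw [log_exp] at h1' h2' ⊢
      have h3 := chord hc (mem_Ioi.2 hs) (mem_Ioi.2 hu) hst htu
      have h4 := mul_nonneg (sub_nonneg.2 htu.le) h1'
      have h5 := mul_nonneg (sub_nonneg.2 hst.le) h2'
      have h6 : 0 < (u - s) * (σ * (log (h t) - (κ - r * t))) := by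
        linear_combination h3 + h4 + h5
      exact (pos_iff_pos_of_mul_pos h6).1 (by linarith))
    (Gint x hx) (Gint y hy) (Gint c (hx.trans hxc))
    (by
      rw [Gval x hx, show κ - ℓ * x = log (normMoment h x) by rw [hκ]; ring,
        exp_log (hnm x hx)]
      ring)
    (by
      rw [Gval y hy, show κ - ℓ * y = log (normMoment h y) by rw [hκ]; linear_combination - hℓe,
        exp_log (hnm y hy)]
      ring)
  rw [Gval c (hx.trans hxc)] at key
  have k2 := pos_of_mul_pos_left key (hgam c (hx.trans hxc)).le
  have k3 := (sign_log hσ (hnm c (hx.trans hxc)) (exp_pos _)).2.1 k2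
  rw [log_exp, mul_sub] at k3
  have k4 : (1 - n) * (σ * log (normMoment h x)) + n * (σ * log (normMoment h y))
      = σ * (κ - ℓ * c) := by
    rw [hκ, hcdef]; linear_combination (σ * n) * hℓe
  linarith

/-! ### Size of `ψ_p(x)` -/

lemma one_sub_exp_pos {t : ℝ} (ht : 0 < t) : 0 < 1 - exp (-t) := by
  rw [sub_pos, exp_lt_one_iff]; linarith

/-- Elementary bounds on the kernel `1 / (1 - e ^ (-t))`, which is equivalent to `1 / t` at `0`
and to `1` at infinity. -/
lemma kernel_bounds {t : ℝ} (ht : 0 < t) :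
    1 ≤ 1 / (1 - exp (-t)) ∧ 1 / t ≤ 1 / (1 - exp (-t)) ∧ 1 / (1 - exp (-t)) ≤ 1 + 1 / t := by
  have hD := one_sub_exp_pos ht
  refine ⟨?_, ?_, ?_⟩
  · rw [le_div_iff₀ hD]; linarith [exp_pos (-t)]
  · exact one_div_le_one_div_of_le hD (by linarith [add_one_le_exp (-t)])
  · rw [div_le_iff₀ hD]
    have h1 : (t + 1) * exp (-t) ≤ exp t * exp (-t) :=
      mul_le_mul_of_nonneg_right (add_one_le_exp t) (exp_pos _).le
    rw [← exp_add, add_neg_cancel, exp_zero] at h1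
    have h2 : (1 + 1 / t) * (1 - exp (-t)) = (t + 1 - (t + 1) * exp (-t)) / t := by
      field_simp
    rw [h2, le_div_iff₀ ht]
    linarith

lemma integrand_bounds (p x : ℝ) {t : ℝ} (ht : 0 < t) :
    t ^ ((p + 1) - 1) * exp (-(x * t)) ≤ t ^ p / (1 - exp (-t)) * exp (-x * t) ∧
    t ^ (p - 1) * exp (-(x * t)) ≤ t ^ p / (1 - exp (-t)) * exp (-x * t) ∧
    t ^ p / (1 - exp (-t)) * exp (-x * t)
      ≤ t ^ ((p + 1) - 1) * exp (-(x * t)) + t ^ (p - 1) * exp (-(x * t)) := by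
  obtain ⟨h1, h2, h3⟩ := kernel_bounds ht
  have hw : 0 ≤ t ^ p * exp (-(x * t)) := (mul_pos (rpow_pos_of_pos ht p) (exp_pos _)).le
  have e1 : t ^ p / (1 - exp (-t)) * exp (-x * t)
      = t ^ p * exp (-(x * t)) * (1 / (1 - exp (-t))) := by
    rw [neg_mul]; ring
  have e2 : t ^ (p - 1) * exp (-(x * t)) = t ^ p * exp (-(x * t)) * (1 / t) := by
    rw [rpow_sub_one ht.ne']; ring
  rw [e1, e2, add_sub_cancel_right]
  have k1 := mul_le_mul_of_nonneg_left h1 hw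
  have k2 := mul_le_mul_of_nonneg_left h2 hw
  have k3 := mul_le_mul_of_nonneg_left h3 hw
  exact ⟨by linarith, k2, by linarith⟩

lemma psiP_integrable {p x : ℝ} (hp : 0 < p) (hx : 0 < x) :
    IntegrableOn (fun t : ℝ => t ^ p / (1 - exp (-t)) * exp (-x * t)) (Ioi 0) := by
  have hp1 : 0 < p + 1 := by linarith
  refine ((integrableOn_rpow_mul_exp hp1 hx).add (integrableOn_rpow_mul_exp hp hx)).mono'
    (by fun_prop) ?_
  filter_upwards [ae_restrict_mem measurableSet_Ioi] with t ht
  obtain ⟨h1, -, h3⟩ := integrand_bounds p x (mem_Ioi.1 ht)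
  have h0 : 0 ≤ t ^ ((p + 1) - 1) * exp (-(x * t)) :=
    (mul_pos (rpow_pos_of_pos ht _) (exp_pos _)).le
  rw [Real.norm_of_nonneg (h0.trans h1)]
  exact h3

lemma psiP_bounds {p x : ℝ} (hp : 0 < p) (hx : 0 < x) :
    Real.Gamma (p + 1) ≤ x ^ (p + 1) * psiP p x ∧ Real.Gamma p ≤ x ^ p * psiP p x ∧
    x ^ (p + 1) * psiP p x ≤ Real.Gamma (p + 1) + x * Real.Gamma p ∧
    x ^ p * psiP p x ≤ Real.Gamma p + x⁻¹ * Real.Gamma (p + 1) := by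
  have hp1 : 0 < p + 1 := by linarith
  have i1 := integrableOn_rpow_mul_exp hp1 hx
  have i2 := integrableOn_rpow_mul_exp hp hx
  have i3 := psiP_integrable hp hx
  have v1 := integral_rpow_mul_exp_neg_mul_Ioi hp1 hx
  have v2 := integral_rpow_mul_exp_neg_mul_Ioi hp hx
  have b1 := setIntegral_mono_on i1 i3 measurableSet_Ioi
    fun t ht => (integrand_bounds p x (mem_Ioi.1 ht)).1
  have b2 := setIntegral_mono_on i2 i3 measurableSet_Ioi
    fun t ht => (integrand_bounds p x (mem_Ioi.1 ht)).2.1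
  have b3 := setIntegral_mono_on i3 (i1.add i2) measurableSet_Ioi
    fun t ht => (integrand_bounds p x (mem_Ioi.1 ht)).2.2
  simp only [Pi.add_apply] at b3
  rw [integral_add i1 i2, v1, v2] at b3
  rw [v1] at b1
  rw [v2] at b2
  change _ ≤ psiP p x at b1 b2
  change psiP p x ≤ _ at b3
  have hX : 0 < x ^ p := rpow_pos_of_pos hx p
  have c1 : x ^ (p + 1) * (1 / x) ^ (p + 1) = 1 := by
    rw [← mul_rpow hx.le (by positivity), mul_one_div_cancel hx.ne', one_rpow]
  have c2 : x ^ p * (1 / x) ^ p = 1 := by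
    rw [← mul_rpow hx.le (by positivity), mul_one_div_cancel hx.ne', one_rpow]
  have c3 : x ^ (p + 1) = x ^ p * x := rpow_add_one hx.ne' p
  have c4 : x⁻¹ * x = 1 := inv_mul_cancel₀ hx.ne'
  have hX1 : 0 < x ^ (p + 1) := rpow_pos_of_pos hx _
  have d1 := mul_le_mul_of_nonneg_left b1 hX1.le
  have d2 := mul_le_mul_of_nonneg_left b2 hX.le
  have d3 := mul_le_mul_of_nonneg_left b3 hX1.le
  have d4 := mul_le_mul_of_nonneg_left b3 hX.le
  have c5 : x ^ p * (1 / x) ^ (p + 1) = x⁻¹ := by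
    rw [c3] at c1
    field_simp
    linear_combination c1
  have c6 : x ^ (p + 1) * (1 / x) ^ p = x := by rw [c3]; linear_combination x * c2
  refine ⟨?_, ?_, ?_, ?_⟩
  · rwa [← mul_assoc, c1, one_mul] at d1
  · rwa [← mul_assoc, c2, one_mul] at d2
  · rwa [mul_add, ← mul_assoc, ← mul_assoc, c1, c6, one_mul] at d3
  · rwa [mul_add, ← mul_assoc, ← mul_assoc, c2, c5, one_mul, add_comm] at d4

lemma psiP_pos {p x : ℝ} (hp : 0 < p) (hx : 0 < x) : 0 < psiP p x :=
  pos_of_mul_pos_right ((Real.Gamma_pos_of_pos hp).trans_le (psiP_bounds hp hx).2.1)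
    (rpow_pos_of_pos hx p).le

lemma tendsto_psiP_zero {p : ℝ} (hp : 0 < p) :
    Tendsto (fun x => x ^ (p + 1) * psiP p x) (nhdsWithin 0 (Ioi 0))
      (nhds (Real.Gamma (p + 1))) := by
  have h : Tendsto (fun x : ℝ => Real.Gamma (p + 1) + x * Real.Gamma p) (nhdsWithin 0 (Ioi 0))
      (nhds (Real.Gamma (p + 1))) := by
    have : Tendsto (fun x : ℝ => Real.Gamma (p + 1) + x * Real.Gamma p) (nhds 0)
      (nhds (Real.Gamma (p + 1) + 0 * Real.Gamma p)) := Continuous.tendsto (by fun_prop) 0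
    rw [zero_mul, add_zero] at this
    exact this.mono_left nhdsWithin_le_nhds
  refine tendsto_of_tendsto_of_tendsto_of_le_of_le' tendsto_const_nhds h ?_ ?_
  · filter_upwards [self_mem_nhdsWithin] with x hx using (psiP_bounds hp hx).1
  · filter_upwards [self_mem_nhdsWithin] with x hx using (psiP_bounds hp hx).2.2.1

lemma tendsto_psiP_atTop {p : ℝ} (hp : 0 < p) :
    Tendsto (fun x => x ^ p * psiP p x) atTop (nhds (Real.Gamma p)) := by
  have h : Tendsto (fun x : ℝ => Real.Gamma p + x⁻¹ * Real.Gamma (p + 1)) atTop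
      (nhds (Real.Gamma p)) := by
    have := (tendsto_inv_atTop_zero (𝕜 := ℝ)).mul_const (Real.Gamma (p + 1))
    simpa using this.const_add (Real.Gamma p)
  refine tendsto_of_tendsto_of_tendsto_of_le_of_le' tendsto_const_nhds h ?_ ?_
  · filter_upwards [eventually_gt_atTop 0] with x hx using (psiP_bounds hp hx).2.1
  · filter_upwards [eventually_gt_atTop 0] with x hx using (psiP_bounds hp hx).2.2.2

/-! ### Log-convexity and log-concavity in the order -/

lemma hasDerivAt_log_one_sub_exp {t : ℝ} (ht : 0 < t) :
    HasDerivAt (fun t => log (1 - exp (-t))) (1 / (exp t - 1)) t := by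
  have h1 : HasDerivAt (fun t : ℝ => 1 - exp (-t)) (exp (-t)) t := by
    simpa using ((hasDerivAt_neg t).exp).const_sub 1
  have h2 := h1.log (one_sub_exp_pos ht).ne'
  convert h2 using 1
  have h3 : 0 < exp t - 1 := by linarith [add_one_le_exp t]
  rw [div_eq_div_iff h3.ne' (one_sub_exp_pos ht).ne', mul_sub (exp (-t)),
    ← exp_add]
  simp

/-- `e ^ (-x t) / (1 - e ^ (-t))` is strictly log-convex in `t`. -/
lemma logConvex_kernel (x : ℝ) :
    StrictConcaveOn ℝ (Ioi 0) fun t => (-1) * log (exp (-x * t) / (1 - exp (-t))) := by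
  have hd : ∀ t ∈ Ioi (0 : ℝ), HasDerivAt (fun t => x * t + log (1 - exp (-t)))
      (x + 1 / (exp t - 1)) t := fun t ht => by
    exact (((hasDerivAt_id t).const_mul x).add (hasDerivAt_log_one_sub_exp ht)).congr_deriv
      (by rw [mul_one])
  have h : StrictConcaveOn ℝ (Ioi 0) fun t => x * t + log (1 - exp (-t)) := by
    refine StrictAntiOn.strictConcaveOn_of_deriv (convex_Ioi 0)
      (fun t ht => (hd t ht).continuousAt.continuousWithinAt) ?_
    rw [interior_Ioi]
    intro s hs t ht hst
    rw [(hd s hs).deriv, (hd t ht).deriv]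
    have h1 : 0 < exp s - 1 := by linarith [add_one_le_exp s, mem_Ioi.1 hs]
    have := one_div_lt_one_div_of_lt h1 (sub_lt_sub_right (exp_lt_exp.2 hst) 1)
    linarith
  refine h.congr fun t ht => ?_
  simp only
  rw [log_div (exp_pos _).ne' (one_sub_exp_pos ht).ne', log_exp]
  ring

/-- `t e ^ (-x t) / (1 - e ^ (-t))` is strictly log-concave in `t`; equivalently
`t / 2 < sinh (t / 2)`. -/
lemma logConcave_kernel (x : ℝ) :
    StrictConcaveOn ℝ (Ioi 0) fun t => 1 * log (t * (exp (-x * t) / (1 - exp (-t)))) := by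
  have hd : ∀ t ∈ Ioi (0 : ℝ), HasDerivAt (fun t => log t - x * t - log (1 - exp (-t)))
      (1 / t - x - 1 / (exp t - 1)) t := fun t ht => by
    exact (((hasDerivAt_log (ne_of_gt ht)).sub ((hasDerivAt_id t).const_mul x)).sub
      (hasDerivAt_log_one_sub_exp ht)).congr_deriv (by rw [mul_one, one_div t])
  have hd2 : ∀ t ∈ Ioi (0 : ℝ), HasDerivAt (fun t : ℝ => 1 / t - x - 1 / (exp t - 1))
      (-(t ^ 2)⁻¹ + exp t / (exp t - 1) ^ 2) t := fun t ht => by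
    have h3 : exp t - 1 ≠ 0 := by linarith [add_one_le_exp t, mem_Ioi.1 ht]
    have h1 := ((hasDerivAt_inv (ne_of_gt ht)).sub_const x).sub
      (((Real.hasDerivAt_exp t).sub_const 1).inv h3)
    simp only [one_div]
    exact h1.congr_deriv (by rw [neg_div, sub_neg_eq_add])
  have hneg : ∀ t ∈ Ioi (0 : ℝ), -(t ^ 2)⁻¹ + exp t / (exp t - 1) ^ 2 < 0 := fun t ht => by
    have ht0 : 0 < t := ht
    have h3 : 0 < exp t - 1 := by linarith [add_one_le_exp t]
    have h4 : t / 2 < sinh (t / 2) := self_lt_sinh_iff.2 (by linarith)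
    rw [sinh_eq] at h4
    set u := exp (t / 2) with hu
    have hu0 : 0 < u := exp_pos _
    have e1 : exp t = u ^ 2 := by rw [hu, ← exp_nat_mul]; congr 1; push_cast; ring
    have e2 : exp (-(t / 2)) * u = 1 := by rw [hu, ← exp_add]; simp
    have h5 : t * u < u ^ 2 - 1 := by nlinarith
    have h6 : (t * u) ^ 2 < (u ^ 2 - 1) ^ 2 := by gcongr
    rw [neg_add_lt_iff_lt_add, add_zero, inv_eq_one_div, e1,
      div_lt_div_iff₀ (by rw [← e1]; positivity) (by positivity)]
    linarith
  have h : StrictConcaveOn ℝ (Ioi 0) fun t => log t - x * t - log (1 - exp (-t)) := by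
    refine StrictAntiOn.strictConcaveOn_of_deriv (convex_Ioi 0)
      (fun t ht => (hd t ht).continuousAt.continuousWithinAt) ?_
    rw [interior_Ioi]
    have h7 : StrictAntiOn (fun t : ℝ => 1 / t - x - 1 / (exp t - 1)) (Ioi 0) := by
      refine strictAntiOn_of_deriv_neg (convex_Ioi 0)
        (fun t ht => (hd2 t ht).continuousAt.continuousWithinAt) ?_
      rw [interior_Ioi]
      intro t ht
      rw [(hd2 t ht).deriv]
      exact hneg t ht
    exact h7.congr fun t ht => (hd t ht).deriv.symm
  refine h.congr fun t ht => ?_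
  have ht0 : 0 < t := ht
  have hD := one_sub_exp_pos ht0
  simp only
  rw [log_mul ht0.ne' (div_pos (exp_pos _) hD).ne', log_div (exp_pos _).ne' hD.ne', log_exp]
  ring

/-- `p ↦ log (ψ_p(x) / Γ(p))` is strictly concave. -/
lemma concave_psiP {x : ℝ} (hx : 0 < x) :
    StrictConvexOn ℝ (Ioi 0) fun p => -log (psiP p x / Real.Gamma p) := by
  have e : ∀ p : ℝ, EqOn (fun t : ℝ => t ^ (p - 1) * (t * (exp (-x * t) / (1 - exp (-t)))))
      (fun t => t ^ p / (1 - exp (-t)) * exp (-x * t)) (Ioi 0) := by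
    intro p t ht
    have ht0 : 0 < t := ht
    simp only
    rw [← mul_assoc, ← rpow_add_one ht0.ne', sub_add_cancel]
    ring
  have h := strictConcaveOn_normMoment (p₀ := 0) (σ := 1) le_rfl (Or.inl rfl)
    (fun t ht => mul_pos ht (div_pos (exp_pos (-x * t)) (one_sub_exp_pos ht)))
    (fun p hp => (psiP_integrable hp hx).congr_fun (e p).symm measurableSet_Ioi)
    (logConcave_kernel x)
  refine h.neg.congr fun p _ => ?_
  simp only [Pi.neg_apply, one_mul, normMoment, psiP]
  rw [setIntegral_congr_fun measurableSet_Ioi (e p)]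

/-- `s ↦ log (ψ_{s-1}(x) / Γ(s))` is strictly convex; this is the logarithm of the Hurwitz zeta
function `ζ(s, x)`. -/
lemma convex_psiP {x : ℝ} (hx : 0 < x) :
    StrictConvexOn ℝ (Ioi 1) fun s => log (psiP (s - 1) x / Real.Gamma s) := by
  have e : ∀ s : ℝ, EqOn (fun t : ℝ => t ^ (s - 1) * (exp (-x * t) / (1 - exp (-t))))
      (fun t => t ^ (s - 1) / (1 - exp (-t)) * exp (-x * t)) (Ioi 0) := by
    intro s t _
    simp only
    ring
  have h := strictConcaveOn_normMoment (p₀ := 1) (σ := -1) zero_le_one (Or.inr rfl)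
    (fun t ht => div_pos (exp_pos (-x * t)) (one_sub_exp_pos ht))
    (fun s hs => (psiP_integrable (sub_pos.2 hs) hx).congr_fun (e s).symm measurableSet_Ioi)
    (logConvex_kernel x)
  refine h.neg.congr fun s _ => ?_
  simp only [Pi.neg_apply, neg_one_mul, neg_neg, normMoment, psiP]
  rw [setIntegral_congr_fun measurableSet_Ioi (e s)]

/-! ### The product inequality and its limits -/

lemma prod_lt_of_sum_log {n : ℕ} {f g : Fin n → ℝ} (hf : ∀ j, 0 < f j) (hg : ∀ j, 0 < g j)
    (h : ∑ j, log (f j) < ∑ j, log (g j)) : ∏ j, f j < ∏ j, g j := by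
  rw [← Real.log_prod (fun j _ => (hf j).ne'), ← Real.log_prod (fun j _ => (hg j).ne')] at h
  exact (Real.log_lt_log_iff (Finset.prod_pos fun j _ => hf j)
    (Finset.prod_pos fun j _ => hg j)).1 h

/-- Multiplying `ψ_p(x)` by a power of `x` whose exponent has the same total over both tuples
does not affect the product of the ratios. -/
lemma prod_ratio_eq {n : ℕ} {p q r s : Fin n → ℝ} (hsum : ∑ j, r j = ∑ j, s j) {x : ℝ}
    (hx : 0 < x) :
    ∏ j, (x ^ r j * psiP (p j) x) / (x ^ s j * psiP (q j) x)
      = ∏ j, psiP (p j) x / psiP (q j) x := by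
  have h : ∏ j, x ^ r j = ∏ j, x ^ s j := by
    rw [← rpow_sum_of_pos hx, ← rpow_sum_of_pos hx, hsum]
  simp only [mul_div_mul_comm]
  rw [Finset.prod_mul_distrib, Finset.prod_div_distrib, h,
    div_self (Finset.prod_pos fun j _ => rpow_pos_of_pos hx _).ne', one_mul]

lemma Majorizes.add_one {n : ℕ} {p q : Fin n → ℝ} (h : Majorizes p q) :
    Majorizes (fun j => p j + 1) (fun j => q j + 1) := by
  obtain ⟨h1, h2, h3, h4, h5⟩ := h
  refine ⟨fun i j hij => by linarith [h1 i j hij], fun i j hij => by linarith [h2 i j hij],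
    fun k => ?_, ?_, fun he => h5 (funext fun j => by linarith [congrFun he j])⟩
  · rw [Finset.sum_add_distrib, Finset.sum_add_distrib]; linarith [h3 k]
  · rw [Finset.sum_add_distrib, Finset.sum_add_distrib, h4]

theorem stmt4 (n : ℕ) (hn : 2 ≤ n) (p q : Fin n → ℝ)
    (hp : ∀ j, 0 < p j) (hq : ∀ j, 0 < q j) (hmaj : Majorizes p q) :
    (∀ x : ℝ, 0 < x →
      (∏ j, Real.Gamma (p j) / Real.Gamma (q j)) < ∏ j, psiP (p j) x / psiP (q j) x ∧
      ∏ j, psiP (p j) x / psiP (q j) x < ∏ j, Real.Gamma (p j + 1) / Real.Gamma (q j + 1)) ∧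
    Tendsto (fun x => ∏ j, psiP (p j) x / psiP (q j) x) (nhdsWithin 0 (Set.Ioi 0))
      (nhds (∏ j, Real.Gamma (p j + 1) / Real.Gamma (q j + 1))) ∧
    Tendsto (fun x => ∏ j, psiP (p j) x / psiP (q j) x) atTop
      (nhds (∏ j, Real.Gamma (p j) / Real.Gamma (q j))) := by
  have gp : ∀ j, 0 < Real.Gamma (p j) := fun j => Real.Gamma_pos_of_pos (hp j)
  have gq : ∀ j, 0 < Real.Gamma (q j) := fun j => Real.Gamma_pos_of_pos (hq j)
  have gp1 : ∀ j, 0 < Real.Gamma (p j + 1) := fun j => Real.Gamma_pos_of_pos (by linarith [hp j])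
  have gq1 : ∀ j, 0 < Real.Gamma (q j + 1) := fun j => Real.Gamma_pos_of_pos (by linarith [hq j])
  refine ⟨fun x hx => ?_, ?_, ?_⟩
  · have yp : ∀ j, 0 < psiP (p j) x := fun j => psiP_pos (hp j) hx
    have yq : ∀ j, 0 < psiP (q j) x := fun j => psiP_pos (hq j) hx
    constructor
    · have h1 := karamata hmaj (concave_psiP hx) hp hq
      simp only [Finset.sum_neg_distrib, neg_lt_neg_iff] at h1
      have h2 := prod_lt_of_sum_log (fun j => div_pos (yq j) (gq j))
        (fun j => div_pos (yp j) (gp j)) h1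
      rw [Finset.prod_div_distrib, Finset.prod_div_distrib,
        div_lt_div_iff₀ (Finset.prod_pos fun j _ => gq j) (Finset.prod_pos fun j _ => gp j)] at h2
      rw [Finset.prod_div_distrib, Finset.prod_div_distrib,
        div_lt_div_iff₀ (Finset.prod_pos fun j _ => gq j) (Finset.prod_pos fun j _ => yq j)]
      linarith
    · have h1 := karamata hmaj.add_one (convex_psiP hx) (fun j => by linarith [hp j])
        (fun j => by linarith [hq j])
      simp only [add_sub_cancel_right] at h1
      have h2 := prod_lt_of_sum_log (fun j => div_pos (yp j) (gp1 j))
        (fun j => div_pos (yq j) (gq1 j)) h1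
      rw [Finset.prod_div_distrib, Finset.prod_div_distrib,
        div_lt_div_iff₀ (Finset.prod_pos fun j _ => gp1 j)
          (Finset.prod_pos fun j _ => gq1 j)] at h2
      rw [Finset.prod_div_distrib, Finset.prod_div_distrib,
        div_lt_div_iff₀ (Finset.prod_pos fun j _ => yq j) (Finset.prod_pos fun j _ => gq1 j)]
      linarith
  · have h := tendsto_finsetProd Finset.univ fun j _ =>
      (tendsto_psiP_zero (hp j)).div (tendsto_psiP_zero (hq j)) (gq1 j).ne'
    refine h.congr' ?_
    filter_upwards [self_mem_nhdsWithin] with x hx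
    exact prod_ratio_eq hmaj.add_one.2.2.2.1 hx
  · have h := tendsto_finsetProd Finset.univ fun j _ =>
      (tendsto_psiP_atTop (hp j)).div (tendsto_psiP_atTop (hq j)) (gq j).ne'
    refine h.congr' ?_
    filter_upwards [eventually_gt_atTop 0] with x hx
    exact prod_ratio_eq hmaj.2.2.2.1 hx
end
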